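/- Let n ≥ 2 and let α, β ∈ UVP_n. Then α and β are fused Markov equivalent if and only if there exists a permutation π ∈ S_n such that s(π) α s(π)^{−1} β^{−1} ∈ [UVP_n, UVP_n]. In other words, two pure unrestricted virtual braids on n strands have equivalent closures as fused links exactly when their images in the abelianization UVP_n/[UVP_n,UVP_n] are conjugate by an element of S_n ≤ UVB_n. -/

import Mathlib

/-!  Common setup: the unrestricted virtual braid group `UVB n`, its generators
σ_k, ρ_k (1-based indices), the elements λ_{i,j} and B_{i,j}, the permutation
homomorphism ι (characterized by `IsIota`), the section s : S_n → UVB n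
(characterized by `IsPermSection`), and fused Markov equivalence. -/

/-- Generators of the unrestricted virtual braid group `UVB n`:
`Sum.inl i` is the classical generator σ_{i+1} and `Sum.inr i` is the virtual
generator ρ_{i+1}, for `i : Fin (n-1)` (so the 1-based indices are `1, …, n-1`). -/
abbrev UVBGen (n : ℕ) := Sum (Fin (n - 1)) (Fin (n - 1))

namespace UVBGen
def sg {n : ℕ} (i : Fin (n - 1)) : FreeGroup (UVBGen n) := FreeGroup.of (Sum.inl i)
def rg {n : ℕ} (i : Fin (n - 1)) : FreeGroup (UVBGen n) := FreeGroup.of (Sum.inr i)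
end UVBGen

open UVBGen in
/-- The defining relations of the unrestricted virtual braid group. -/
def uvbRels (n : ℕ) : Set (FreeGroup (UVBGen n)) :=
  {r | (∃ i j : Fin (n - 1), (j : ℕ) = (i : ℕ) + 1 ∧
          (r = sg i * sg j * sg i * (sg j * sg i * sg j)⁻¹ ∨
           r = rg i * rg j * rg i * (rg j * rg i * rg j)⁻¹ ∨
           r = rg i * rg j * sg i * (sg j * rg i * rg j)⁻¹ ∨
           r = rg i * sg j * sg i * (sg j * sg i * rg j)⁻¹ ∨
           r = rg j * sg i * sg j * (sg i * sg j * rg i)⁻¹)) ∨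
       (∃ i j : Fin (n - 1), ((i : ℕ) + 2 ≤ (j : ℕ) ∨ (j : ℕ) + 2 ≤ (i : ℕ)) ∧
          (r = sg i * sg j * (sg j * sg i)⁻¹ ∨
           r = rg i * rg j * (rg j * rg i)⁻¹ ∨
           r = sg i * rg j * (rg j * sg i)⁻¹)) ∨
       (∃ i : Fin (n - 1), r = rg i * rg i)}

/-- The unrestricted virtual braid group on `n` strands. -/
abbrev UVB (n : ℕ) := PresentedGroup (uvbRels n)

namespace UVB

/-- The generator σ_k (1-based index; meaningful for `1 ≤ k ≤ n-1`, junk value `1` otherwise). -/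
def sigma (n k : ℕ) : UVB n :=
  if h : 1 ≤ k ∧ k ≤ n - 1 then PresentedGroup.of (Sum.inl ⟨k - 1, by omega⟩) else 1

/-- The generator ρ_k (1-based index; meaningful for `1 ≤ k ≤ n-1`, junk value `1` otherwise). -/
def rho (n k : ℕ) : UVB n :=
  if h : 1 ≤ k ∧ k ≤ n - 1 then PresentedGroup.of (Sum.inr ⟨k - 1, by omega⟩) else 1

/-- The element λ_{i,j} of `UVB n` (1-based indices `1 ≤ i ≠ j ≤ n`; junk value `1` if `i = j`).
For `i < j`:  `λ_{i,j} = ρ_{j-1}⋯ρ_{i+1} · ρ_i σ_i⁻¹ · ρ_{i+1}⋯ρ_{j-1}` and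
`λ_{j,i} = ρ_{j-1}⋯ρ_{i+1} · σ_i⁻¹ ρ_i · ρ_{i+1}⋯ρ_{j-1}`. -/
def lam (n i j : ℕ) : UVB n :=
  if i < j then
    (((List.range' (i + 1) (j - 1 - i)).reverse.map (rho n)).prod) *
      (rho n i * (sigma n i)⁻¹) *
      (((List.range' (i + 1) (j - 1 - i)).map (rho n)).prod)
  else if j < i then
    (((List.range' (j + 1) (i - 1 - j)).reverse.map (rho n)).prod) *
      ((sigma n j)⁻¹ * rho n j) *
      (((List.range' (j + 1) (i - 1 - j)).map (rho n)).prod)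
  else 1

/-- The element `B_{i,j} = ρ_{j-1}ρ_{j-2}⋯ρ_{i+1}ρ_i` for `i < j`, and `1` otherwise. -/
def B (n i j : ℕ) : UVB n :=
  if i < j then ((List.range' i (j - i)).reverse.map (rho n)).prod else 1

/-- The subgroup `U_j` of `UVB n` generated by `{λ_{i,j}, λ_{j,i} : 1 ≤ i < j}`. -/
def U (n j : ℕ) : Subgroup (UVB n) :=
  Subgroup.closure {x | ∃ i, 1 ≤ i ∧ i < j ∧ (x = lam n i j ∨ x = lam n j i)}

end UVB

/-- `ι : UVB n →* S_n` is the homomorphism sending σ_k and ρ_k to the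
transposition (k, k+1) (written 0-based on `Fin n`). -/
def IsIota (n : ℕ) (ι : UVB n →* Equiv.Perm (Fin n)) : Prop :=
  ∀ (k : ℕ) (h1 : 1 ≤ k) (h2 : k ≤ n - 1),
    ι (UVB.sigma n k) = Equiv.swap ⟨k - 1, by omega⟩ ⟨k, by omega⟩ ∧
    ι (UVB.rho n k) = Equiv.swap ⟨k - 1, by omega⟩ ⟨k, by omega⟩

/-- `s : S_n →* UVB n` is the homomorphism sending the transposition (k, k+1) to ρ_k. -/
def IsPermSection (n : ℕ) (s : Equiv.Perm (Fin n) →* UVB n) : Prop :=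
  ∀ (k : ℕ) (h1 : 1 ≤ k) (h2 : k ≤ n - 1),
    s (Equiv.swap ⟨k - 1, by omega⟩ ⟨k, by omega⟩) = UVB.rho n k

/-- The number of orbits of a permutation of `Fin n`
(= number of fixed points + number of nontrivial cycles). -/
def numOrbits {n : ℕ} (π : Equiv.Perm (Fin n)) : ℕ :=
  (Finset.univ.filter fun x => π x = x).card + π.cycleType.card

namespace UVB

private def embedGen (n : ℕ) : UVBGen n → UVBGen (n + 1)
  | Sum.inl i => Sum.inl ⟨i.val, by have := i.isLt; omega⟩
  | Sum.inr i => Sum.inr ⟨i.val, by have := i.isLt; omega⟩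

open UVBGen in
/-- The natural inclusion `UVB n →* UVB (n+1)` (σ_k ↦ σ_k, ρ_k ↦ ρ_k). -/
def incl (n : ℕ) : UVB n →* UVB (n + 1) :=
  PresentedGroup.toGroup (f := fun x => PresentedGroup.of (embedGen n x)) (by
    have key : (FreeGroup.lift fun x => (PresentedGroup.of (embedGen n x) : UVB (n + 1)))
        = (PresentedGroup.mk (uvbRels (n + 1))).comp (FreeGroup.map (embedGen n)) := by
      ext x
      simp [PresentedGroup.of]
    intro r hr
    rw [key]
    simp only [MonoidHom.comp_apply]
    have hmem : FreeGroup.map (embedGen n) r ∈ uvbRels (n + 1) := by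
      have hsg : ∀ i : Fin (n - 1), FreeGroup.map (embedGen n) (sg i)
          = sg (⟨i.val, by have := i.isLt; omega⟩ : Fin (n + 1 - 1)) := by
        intro i; simp [sg, embedGen]
      have hrg : ∀ i : Fin (n - 1), FreeGroup.map (embedGen n) (rg i)
          = rg (⟨i.val, by have := i.isLt; omega⟩ : Fin (n + 1 - 1)) := by
        intro i; simp [rg, embedGen]
      rcases hr with ⟨i, j, hij, hc⟩ | ⟨i, j, hij, hc⟩ | ⟨i, hc⟩
      · refine Or.inl ⟨⟨i.val, by have := i.isLt; omega⟩, ⟨j.val, by have := j.isLt; omega⟩,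
          by simpa using hij, ?_⟩
        rcases hc with h | h | h | h | h <;> subst h <;>
          simp only [map_mul, map_inv, hsg, hrg] <;> tauto
      · refine Or.inr (Or.inl ⟨⟨i.val, by have := i.isLt; omega⟩, ⟨j.val, by have := j.isLt; omega⟩,
          by simpa using hij, ?_⟩)
        rcases hc with h | h | h <;> subst h <;>
          simp only [map_mul, map_inv, hsg, hrg] <;> tauto
      · refine Or.inr (Or.inr ⟨⟨i.val, by have := i.isLt; omega⟩, ?_⟩)
        subst hc
        simp only [map_mul, hsg, hrg]
    exact (QuotientGroup.eq_one_iff _).mpr (Subgroup.subset_normalClosure hmem))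

end UVB

/-- The elementary fused Markov moves on the disjoint union of the groups `UVB n`:
conjugation, and the three right stabilizations (positive, negative, virtual). -/
inductive MarkovBase : (Σ n, UVB n) → (Σ n, UVB n) → Prop
  | conj (n : ℕ) (α γ : UVB n) : MarkovBase ⟨n, α⟩ ⟨n, γ * α * γ⁻¹⟩
  | stabPos (n : ℕ) (α : UVB n) :
      MarkovBase ⟨n, α⟩ ⟨n + 1, UVB.incl n α * UVB.sigma (n + 1) n⟩
  | stabNeg (n : ℕ) (α : UVB n) :
      MarkovBase ⟨n, α⟩ ⟨n + 1, UVB.incl n α * (UVB.sigma (n + 1) n)⁻¹⟩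
  | stabVirt (n : ℕ) (α : UVB n) :
      MarkovBase ⟨n, α⟩ ⟨n + 1, UVB.incl n α * UVB.rho (n + 1) n⟩

/-- Fused Markov equivalence: the smallest equivalence relation generated by the
elementary Markov moves.  By Kamada's theorem, two unrestricted virtual braids are
fused Markov equivalent iff their closures are equivalent fused links. -/
def Markov : (Σ n, UVB n) → (Σ n, UVB n) → Prop := Relation.EqvGen MarkovBase


namespace UVBProof

open UVB

lemma incl_sigma (n k : ℕ) (h1 : 1 ≤ k) (h2 : k ≤ n - 1) :
    incl n (sigma n k) = sigma (n + 1) k := by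
  have h3 : 1 ≤ k ∧ k ≤ n + 1 - 1 := ⟨h1, by omega⟩
  rw [sigma, sigma, dif_pos ⟨h1, h2⟩, dif_pos h3, incl, PresentedGroup.toGroup.of]
  rfl

lemma incl_rho (n k : ℕ) (h1 : 1 ≤ k) (h2 : k ≤ n - 1) :
    incl n (rho n k) = rho (n + 1) k := by
  have h3 : 1 ≤ k ∧ k ≤ n + 1 - 1 := ⟨h1, by omega⟩
  rw [rho, rho, dif_pos ⟨h1, h2⟩, dif_pos h3, incl, PresentedGroup.toGroup.of]
  rfl

/-- Homomorphisms out of `UVB n` are determined by the values on generators. -/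
lemma uvb_hom_ext {n : ℕ} {G : Type*} [Group G] {f g : UVB n →* G}
    (hs : ∀ k, 1 ≤ k → k ≤ n - 1 → f (sigma n k) = g (sigma n k))
    (hr : ∀ k, 1 ≤ k → k ≤ n - 1 → f (rho n k) = g (rho n k)) : f = g := by
  apply PresentedGroup.ext
  rintro (i | i)
  · have h : 1 ≤ i.val + 1 ∧ i.val + 1 ≤ n - 1 := ⟨by omega, by omega⟩
    have := hs (i.val + 1) h.1 h.2
    rw [sigma, dif_pos h] at this
    exact this
  · have h : 1 ≤ i.val + 1 ∧ i.val + 1 ≤ n - 1 := ⟨by omega, by omega⟩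
    have := hr (i.val + 1) h.1 h.2
    rw [rho, dif_pos h] at this
    exact this

lemma uvb_generated {n : ℕ} (H : Subgroup (UVB n))
    (hs : ∀ k, 1 ≤ k → k ≤ n - 1 → sigma n k ∈ H)
    (hr : ∀ k, 1 ≤ k → k ≤ n - 1 → rho n k ∈ H) (x : UVB n) : x ∈ H := by
  apply PresentedGroup.generated_by
  rintro (i | i)
  · have h : 1 ≤ i.val + 1 ∧ i.val + 1 ≤ n - 1 := ⟨by omega, by omega⟩
    have := hs (i.val + 1) h.1 h.2
    rw [sigma, dif_pos h] at this
    exact this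
  · have h : 1 ≤ i.val + 1 ∧ i.val + 1 ≤ n - 1 := ⟨by omega, by omega⟩
    have := hr (i.val + 1) h.1 h.2
    rw [rho, dif_pos h] at this
    exact this

lemma rel_of_mem {n : ℕ} {x y : FreeGroup (UVBGen n)} (h : x * y⁻¹ ∈ uvbRels n) :
    PresentedGroup.mk (uvbRels n) x = PresentedGroup.mk (uvbRels n) y :=
  PresentedGroup.mk_eq_mk_of_mul_inv_mem h

section rels
variable {n k l : ℕ}

lemma sigma_eq (h : 1 ≤ k ∧ k ≤ n - 1) : sigma n k =
    PresentedGroup.mk (uvbRels n) (UVBGen.sg ⟨k - 1, by omega⟩) := by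
  rw [sigma, dif_pos h]; rfl

lemma rho_eq (h : 1 ≤ k ∧ k ≤ n - 1) : rho n k =
    PresentedGroup.mk (uvbRels n) (UVBGen.rg ⟨k - 1, by omega⟩) := by
  rw [rho, dif_pos h]; rfl

lemma rel_sss (h1 : 1 ≤ k) (h2 : k + 1 ≤ n - 1) :
    sigma n k * sigma n (k+1) * sigma n k = sigma n (k+1) * sigma n k * sigma n (k+1) := by
  rw [sigma_eq ⟨h1, by omega⟩, sigma_eq ⟨by omega, h2⟩]
  simp only [← map_mul]
  exact rel_of_mem (Or.inl ⟨⟨k-1, by omega⟩, ⟨k+1-1, by omega⟩, by simp; omega, by tauto⟩)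

lemma rel_rrr (h1 : 1 ≤ k) (h2 : k + 1 ≤ n - 1) :
    rho n k * rho n (k+1) * rho n k = rho n (k+1) * rho n k * rho n (k+1) := by
  rw [rho_eq ⟨h1, by omega⟩, rho_eq ⟨by omega, h2⟩]
  simp only [← map_mul]
  exact rel_of_mem (Or.inl ⟨⟨k-1, by omega⟩, ⟨k+1-1, by omega⟩, by simp; omega, by tauto⟩)

lemma rel_rrs (h1 : 1 ≤ k) (h2 : k + 1 ≤ n - 1) :
    rho n k * rho n (k+1) * sigma n k = sigma n (k+1) * rho n k * rho n (k+1) := by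
  rw [rho_eq ⟨h1, by omega⟩, rho_eq ⟨by omega, h2⟩, sigma_eq ⟨h1, by omega⟩,
    sigma_eq ⟨by omega, h2⟩]
  simp only [← map_mul]
  exact rel_of_mem (Or.inl ⟨⟨k-1, by omega⟩, ⟨k+1-1, by omega⟩, by simp; omega, by tauto⟩)

lemma rel_rss (h1 : 1 ≤ k) (h2 : k + 1 ≤ n - 1) :
    rho n k * sigma n (k+1) * sigma n k = sigma n (k+1) * sigma n k * rho n (k+1) := by
  rw [rho_eq ⟨h1, by omega⟩, rho_eq ⟨by omega, h2⟩, sigma_eq ⟨h1, by omega⟩,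
    sigma_eq ⟨by omega, h2⟩]
  simp only [← map_mul]
  exact rel_of_mem (Or.inl ⟨⟨k-1, by omega⟩, ⟨k+1-1, by omega⟩, by simp; omega, by tauto⟩)

lemma rel_rss' (h1 : 1 ≤ k) (h2 : k + 1 ≤ n - 1) :
    rho n (k+1) * sigma n k * sigma n (k+1) = sigma n k * sigma n (k+1) * rho n k := by
  rw [rho_eq ⟨h1, by omega⟩, rho_eq ⟨by omega, h2⟩, sigma_eq ⟨h1, by omega⟩,
    sigma_eq ⟨by omega, h2⟩]
  simp only [← map_mul]
  exact rel_of_mem (Or.inl ⟨⟨k-1, by omega⟩, ⟨k+1-1, by omega⟩, by simp; omega, by tauto⟩)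

lemma rel_ss_far (h1 : 1 ≤ k) (h2 : k + 2 ≤ l) (h3 : l ≤ n - 1) :
    sigma n k * sigma n l = sigma n l * sigma n k := by
  rw [sigma_eq ⟨h1, by omega⟩, sigma_eq ⟨by omega, h3⟩]
  simp only [← map_mul]
  exact rel_of_mem (Or.inr (Or.inl
    ⟨⟨k-1, by omega⟩, ⟨l-1, by omega⟩, by simp; omega, by tauto⟩))

lemma rel_rr_far (h1 : 1 ≤ k) (h2 : k + 2 ≤ l) (h3 : l ≤ n - 1) :
    rho n k * rho n l = rho n l * rho n k := by
  rw [rho_eq ⟨h1, by omega⟩, rho_eq ⟨by omega, h3⟩]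
  simp only [← map_mul]
  exact rel_of_mem (Or.inr (Or.inl
    ⟨⟨k-1, by omega⟩, ⟨l-1, by omega⟩, by simp; omega, by tauto⟩))

lemma rel_sr_far (h1 : 1 ≤ k) (h2 : k + 2 ≤ l) (h3 : l ≤ n - 1) :
    sigma n k * rho n l = rho n l * sigma n k := by
  rw [sigma_eq ⟨h1, by omega⟩, rho_eq ⟨by omega, h3⟩]
  simp only [← map_mul]
  exact rel_of_mem (Or.inr (Or.inl
    ⟨⟨k-1, by omega⟩, ⟨l-1, by omega⟩, by simp; omega, by tauto⟩))

lemma rel_rs_far (h1 : 1 ≤ k) (h2 : k + 2 ≤ l) (h3 : l ≤ n - 1) :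
    sigma n l * rho n k = rho n k * sigma n l := by
  rw [rho_eq ⟨h1, by omega⟩, sigma_eq ⟨by omega, h3⟩]
  simp only [← map_mul]
  exact rel_of_mem (Or.inr (Or.inl
    ⟨⟨l-1, by omega⟩, ⟨k-1, by omega⟩, by simp; omega, by tauto⟩))

lemma rel_rr (h1 : 1 ≤ k) (h2 : k ≤ n - 1) : rho n k * rho n k = 1 := by
  rw [rho_eq ⟨h1, by omega⟩]
  simp only [← map_mul]
  exact PresentedGroup.one_of_mem (Or.inr (Or.inr ⟨_, rfl⟩))

end rels

end UVBProof

namespace UVBProof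

section coxeter

variable {P : Type*} [Group P]

/-- `desc t k d = t_{k+d-1} ⋯ t_k`. -/
def desc (t : ℕ → P) (k : ℕ) : ℕ → P
  | 0 => 1
  | d + 1 => t (k + d) * desc t k d

/-- type A Coxeter relations for `t_0, …, t_{n-1}`. -/
structure CoxA (t : ℕ → P) (n : ℕ) : Prop where
  sq : ∀ i, i < n → t i * t i = 1
  braid : ∀ i, i + 1 < n → t i * t (i+1) * t i = t (i+1) * t i * t (i+1)
  far : ∀ i j, i + 2 ≤ j → j < n → t i * t j = t j * t i

lemma CoxA.mono {t : ℕ → P} {n m : ℕ} (h : CoxA t n) (hm : m ≤ n) : CoxA t m :=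
  ⟨fun i hi => h.sq i (by omega), fun i hi => h.braid i (by omega),
    fun i j hi hj => h.far i j hi (by omega)⟩

variable {t : ℕ → P} {n : ℕ}

lemma desc_succ' (t : ℕ → P) (k d : ℕ) : desc t k (d+1) = desc t (k+1) d * t k := by
  induction d with
  | zero => simp [desc]
  | succ d ih =>
    rw [desc, ih, desc, ← mul_assoc]
    congr 3
    omega

lemma desc_comm_low (h : CoxA t n) {k d i : ℕ} (hd : k + d ≤ n) (hi : i + 1 < k) :
    desc t k d * t i = t i * desc t k d := by
  induction d with
  | zero => simp [desc]
  | succ d ih =>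
    rw [desc, mul_assoc, ih (by omega), ← mul_assoc, ← h.far i (k+d) (by omega) (by omega),
      mul_assoc]

lemma desc_comm_high (h : CoxA t n) {k d i : ℕ} (hd : k + d < i) (hi : i < n) :
    desc t k d * t i = t i * desc t k d := by
  induction d with
  | zero => simp [desc]
  | succ d ih =>
    rw [desc, mul_assoc, ih (by omega), ← mul_assoc, h.far (k+d) i (by omega) (by omega),
      mul_assoc]

lemma desc_shift (h : CoxA t n) {k d j : ℕ} (hd : k + d ≤ n) (hj : j + 1 < d) :
    desc t k d * t (k + j + 1) = t (k + j) * desc t k d := by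
  induction d with
  | zero => omega
  | succ d ih =>
    rcases Nat.lt_or_ge (j + 1) d with h1 | h1
    · rw [desc, mul_assoc, ih (by omega) h1, ← mul_assoc, ← mul_assoc,
        h.far (k+j) (k+d) (by omega) (by omega)]
    · obtain rfl : d = j + 1 := by omega
      have e1 := desc_comm_high h (k := k) (d := j) (i := k + j + 1) (by omega) (by omega)
      have e2 := h.braid (k + j) (by omega)
      simp only [desc]
      rw [mul_assoc, mul_assoc, e1]
      simp only [← mul_assoc] at e2 ⊢
      rw [← add_assoc, ← e2]

lemma closure_decomp (h : CoxA t (n+1)) (x : P)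
    (hx : x ∈ Subgroup.closure (t '' Set.Iio (n+1))) :
    ∃ y ∈ Subgroup.closure (t '' Set.Iio n), ∃ k ≤ n + 1, x = y * desc t k (n + 1 - k) := by
  have key : ∀ x : P, (∃ y ∈ Subgroup.closure (t '' Set.Iio n), ∃ k ≤ n + 1,
      x = y * desc t k (n + 1 - k)) → ∀ i, i < n + 1 →
      ∃ y ∈ Subgroup.closure (t '' Set.Iio n), ∃ k ≤ n + 1,
      x * t i = y * desc t k (n + 1 - k) := by
    rintro x ⟨y, hy, k, hk, rfl⟩ i hi
    rcases lt_trichotomy (i + 1) k with h1 | h1 | h1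
    · refine ⟨y * t i, mul_mem hy (Subgroup.subset_closure ⟨i, by simp; omega, rfl⟩), k, hk, ?_⟩
      rw [mul_assoc, desc_comm_low h (by omega) h1, mul_assoc]
    · refine ⟨y, hy, i, by omega, ?_⟩
      obtain ⟨d, hd⟩ : ∃ d, n + 1 - i = d + 1 := ⟨n - i, by omega⟩
      have hd' : n + 1 - k = d := by omega
      rw [hd, hd', desc_succ', mul_assoc, h1]
    · rcases Nat.lt_or_ge k i with h2 | h2
      · obtain ⟨j, rfl⟩ : ∃ j, i = k + j + 1 := ⟨i - k - 1, by omega⟩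
        refine ⟨y * t (k + j), mul_mem hy (Subgroup.subset_closure ⟨k + j, by simp; omega, rfl⟩),
          k, hk, ?_⟩
        rw [mul_assoc, desc_shift h (by omega) (by omega), mul_assoc]
      · obtain rfl : k = i := by omega
        refine ⟨y, hy, k + 1, by omega, ?_⟩
        obtain ⟨d, hd⟩ : ∃ d, n + 1 - k = d + 1 := ⟨n - k, by omega⟩
        have hd' : n + 1 - (k+1) = d := by omega
        rw [hd, hd', desc_succ', mul_assoc, mul_assoc, h.sq k (by omega), mul_one]
  induction hx using Subgroup.closure_induction_right with
  | one => exact ⟨1, one_mem _, n + 1, le_rfl, by simp [desc]⟩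
  | mul_right x _ y hy ih =>
    obtain ⟨i, hi, rfl⟩ := hy
    exact key x ih i hi
  | mul_inv_cancel x _ y hy ih =>
    obtain ⟨i, hi, rfl⟩ := hy
    rw [inv_eq_of_mul_eq_one_left (h.sq i hi)]
    exact key x ih i hi

end coxeter

section sec

variable {G : Type*} [Group G]

/-- the adjacent transposition in `Perm ℕ`. -/
def adj (i : ℕ) : Equiv.Perm ℕ := Equiv.swap i (i + 1)

lemma coxA_adj (n : ℕ) : CoxA adj n := by
  refine ⟨fun i _ => Equiv.swap_mul_self _ _, fun i _ => ?_, fun i j h _ => ?_⟩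
  · ext x
    simp only [adj, Equiv.Perm.mul_apply, Equiv.swap_apply_def]
    split_ifs <;> omega
  · ext x
    simp only [adj, Equiv.Perm.mul_apply, Equiv.swap_apply_def]
    split_ifs <;> omega

lemma desc_adj (k d : ℕ) : desc adj k d k = k + d := by
  induction d with
  | zero => simp [desc]
  | succ d ih => simp [desc, ih, adj, add_assoc]

/-- The pair of generators. -/
def pr (r : ℕ → G) (i : ℕ) : Equiv.Perm ℕ × G := (adj i, r i)

lemma coxA_pr {r : ℕ → G} {n : ℕ} (h : CoxA r n) : CoxA (pr r) n := by
  refine ⟨fun i hi => ?_, fun i hi => ?_, fun i j hi hj => ?_⟩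
  · exact Prod.ext ((coxA_adj n).sq i hi) (h.sq i hi)
  · exact Prod.ext ((coxA_adj n).braid i hi) (h.braid i hi)
  · exact Prod.ext ((coxA_adj n).far i j hi hj) (h.far i j hi hj)

lemma desc_pr_fst (r : ℕ → G) (k d : ℕ) : (desc (pr r) k d).1 = desc adj k d := by
  induction d with
  | zero => rfl
  | succ d ih => simp [desc, ih, pr]

lemma closure_fix (r : ℕ → G) (n m : ℕ) (hm : n < m) (x : Equiv.Perm ℕ × G)
    (hx : x ∈ Subgroup.closure (pr r '' Set.Iio n)) : x.1 m = m := by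
  induction hx using Subgroup.closure_induction with
  | mem x hx =>
    obtain ⟨i, hi, rfl⟩ := hx
    simp only [Set.mem_Iio] at hi
    exact Equiv.swap_apply_of_ne_of_ne (by omega) (by omega)
  | one => rfl
  | mul x y _ _ h1 h2 => simp [h1, h2]
  | inv x _ h =>
    change (x.1)⁻¹ m = m
    rw [Equiv.Perm.inv_eq_iff_eq, h]

lemma closure_one {r : ℕ → G} {n : ℕ} (h : CoxA r n) (g : G)
    (hg : ((1 : Equiv.Perm ℕ), g) ∈ Subgroup.closure (pr r '' Set.Iio n)) : g = 1 := by
  induction n generalizing g with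
  | zero => simpa using hg
  | succ n ih =>
    obtain ⟨⟨p, y⟩, hy, k, hk, he⟩ := closure_decomp (coxA_pr h) _ hg
    have h1 := congrArg Prod.fst he
    simp only [Prod.fst_mul, desc_pr_fst] at h1
    have h2 := congrArg (fun f => f k) h1
    simp only [Equiv.Perm.one_apply, Equiv.Perm.mul_apply, desc_adj] at h2
    have h3 := closure_fix r n (n+1) (by omega) _ hy
    simp only at h3
    rw [show k + (n + 1 - k) = n + 1 by omega, h3] at h2
    subst h2
    simp only [Nat.sub_self, desc, mul_one] at he
    rw [Prod.mk.injEq] at he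
    obtain ⟨rfl, rfl⟩ := he
    exact ih (h.mono (by omega)) _ hy

/-- adjacent transpositions generate. -/
lemma perm_closure (n : ℕ) (H : Subgroup (Equiv.Perm (Fin n)))
    (h : ∀ (k : ℕ) (hk : k + 1 < n), Equiv.swap (⟨k, by omega⟩ : Fin n) ⟨k + 1, hk⟩ ∈ H)
    (x : Equiv.Perm (Fin n)) : x ∈ H := by
  cases n with
  | zero => rw [Subsingleton.elim x 1]; exact one_mem _
  | succ n =>
    have := Equiv.Perm.mclosure_swap_castSucc_succ n
    have h2 : Submonoid.closure (Set.range fun i : Fin n ↦ Equiv.swap i.castSucc i.succ)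
        ≤ H.toSubmonoid := by
      rw [Submonoid.closure_le]
      rintro _ ⟨i, rfl⟩
      exact h i.val (by omega)
    rw [this] at h2
    exact h2 trivial

lemma perm_hom_ext {n : ℕ} {f g : Equiv.Perm (Fin n) →* G}
    (h : ∀ (k : ℕ) (hk : k + 1 < n), f (Equiv.swap (⟨k, by omega⟩ : Fin n) ⟨k + 1, hk⟩) =
      g (Equiv.swap (⟨k, by omega⟩ : Fin n) ⟨k + 1, hk⟩)) : f = g := by
  ext x
  exact perm_closure n (f.eqLocus g) h x

lemma viaEmbedding_swap {A B : Type*} [DecidableEq A] [DecidableEq B] (e : A ↪ B) (a b : A) :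
    (Equiv.swap a b).viaEmbedding e = Equiv.swap (e a) (e b) := by
  ext x
  by_cases hx : x ∈ Set.range e
  · obtain ⟨y, rfl⟩ := hx
    rw [Equiv.Perm.viaEmbedding_apply]
    simp only [Equiv.swap_apply_def, e.injective.eq_iff]
    split_ifs <;> rfl
  · rw [Equiv.Perm.viaEmbedding_apply_of_notMem _ _ _ hx, Equiv.swap_apply_of_ne_of_ne]
    · rintro rfl; exact hx ⟨_, rfl⟩
    · rintro rfl; exact hx ⟨_, rfl⟩

/-- Coxeter presentation of the symmetric group: universal property. -/
theorem exists_perm_hom (n : ℕ) {r : ℕ → G} (h : CoxA r (n - 1)) :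
    ∃ s : Equiv.Perm (Fin n) →* G, ∀ (k : ℕ) (hk : k + 1 < n),
      s (Equiv.swap (⟨k, by omega⟩ : Fin n) ⟨k + 1, hk⟩) = r k := by
  let Γ := Subgroup.closure (pr r '' Set.Iio (n - 1))
  let e : Equiv.Perm (Fin n) →* Equiv.Perm ℕ := Equiv.Perm.viaEmbeddingHom Fin.valEmbedding
  have he : ∀ (k : ℕ) (hk : k + 1 < n),
      e (Equiv.swap (⟨k, by omega⟩ : Fin n) ⟨k + 1, hk⟩) = adj k := by
    intro k hk
    exact viaEmbedding_swap _ _ _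
  have hgen : ∀ (k : ℕ) (hk : k + 1 < n),
      (e (Equiv.swap (⟨k, by omega⟩ : Fin n) ⟨k + 1, hk⟩), r k) ∈ Γ := by
    intro k hk
    rw [he]
    exact Subgroup.subset_closure ⟨k, by simp; omega, rfl⟩
  have hex : ∀ π, ∃ g, (e π, g) ∈ Γ := by
    intro π
    have := perm_closure n ((Γ.map (MonoidHom.fst _ _)).comap e) (fun k hk => by
      exact ⟨_, hgen k hk, rfl⟩) π
    obtain ⟨⟨p, g⟩, hg, hp⟩ := this
    simp only [MonoidHom.coe_fst] at hp
    subst hp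
    exact ⟨g, hg⟩
  have huniq : ∀ p g g', (p, g) ∈ Γ → (p, g') ∈ Γ → g = g' := by
    intro p g g' h1 h2
    have := mul_mem h1 (inv_mem h2)
    simp only [Prod.inv_mk, Prod.mk_mul_mk, mul_inv_cancel] at this
    exact mul_inv_eq_one.mp (closure_one h _ this)
  choose s hs using hex
  have hmul : ∀ a b, s (a * b) = s a * s b := by
    intro a b
    have h1 : (e a, s a) * (e b, s b) ∈ Γ := Γ.mul_mem (hs a) (hs b)
    have h2 := hs (a * b)
    rw [map_mul] at h2
    exact huniq _ _ _ h2 h1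
  refine ⟨MonoidHom.mk' s hmul, fun k hk => ?_⟩
  · exact huniq _ _ _ (hs _) (hgen k hk)

end sec

end UVBProof

namespace UVBProof

open UVB

lemma exists_section (n : ℕ) : ∃ s : Equiv.Perm (Fin n) →* UVB n, ∀ (k : ℕ) (hk : k + 1 < n),
      s (Equiv.swap (⟨k, by omega⟩ : Fin n) ⟨k + 1, hk⟩) = rho n (k + 1) := by
  apply exists_perm_hom n (r := fun k => rho n (k + 1))
  refine ⟨fun i hi => ?_, fun i hi => ?_, fun i j hi hj => ?_⟩
  · exact rel_rr (by omega) (by omega)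
  · exact rel_rrr (by omega) (by omega)
  · exact rel_rr_far (by omega) (by omega) (by omega)

/-- the section -/
noncomputable def sec (n : ℕ) : Equiv.Perm (Fin n) →* UVB n := (exists_section n).choose

lemma sec_adj (n k : ℕ) (hk : k + 1 < n) :
    sec n (Equiv.swap (⟨k, by omega⟩ : Fin n) ⟨k + 1, hk⟩) = rho n (k + 1) :=
  (exists_section n).choose_spec k hk

/-- the element `λ_{1,2}` -/
def x0 (n : ℕ) : UVB n := rho n 1 * (sigma n 1)⁻¹

lemma fix_comm (m : ℕ) (π : Equiv.Perm (Fin (m + 2))) (h0 : π 0 = 0) (h1 : π 1 = 1) :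
    sec (m + 2) π * x0 (m + 2) = x0 (m + 2) * sec (m + 2) π := by
  let e : Fin m ↪ Fin (m + 2) := Fin.addNatEmb 2
  have hge : ∀ i : Fin m, 2 ≤ (π (e i)).val := by
    intro i
    have a0 : π (e i) ≠ 0 := by
      rw [← h0]; intro h; have := congrArg Fin.val (π.injective h); simp [e] at this
    have a1 : π (e i) ≠ 1 := by
      rw [← h1]; intro h; have := congrArg Fin.val (π.injective h); simp [e] at this
    have b0 : (π (e i)).val ≠ 0 := fun h => a0 (Fin.ext h)
    have b1 : (π (e i)).val ≠ 1 := fun h => a1 (Fin.ext h)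
    omega
  let f : Fin m → Fin m := fun i => ⟨(π (e i)).val - 2, by
    have := hge i; have := (π (e i)).isLt; omega⟩
  have hf : ∀ i, e (f i) = π (e i) := by
    intro i
    apply Fin.ext
    have := hge i
    simp [e, f] at this ⊢
    omega
  have hinj : Function.Injective f := by
    intro i j hij
    have := congrArg e hij
    rw [hf, hf] at this
    exact e.injective (π.injective this)
  let π' : Equiv.Perm (Fin m) := Equiv.ofBijective f (Finite.injective_iff_bijective.mp hinj)
  have hπ : π = Equiv.Perm.viaEmbeddingHom e π' := by
    ext x : 1
    rw [Equiv.Perm.viaEmbeddingHom_apply]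
    by_cases hx : x ∈ Set.range e
    · obtain ⟨i, rfl⟩ := hx
      rw [Equiv.Perm.viaEmbedding_apply]
      exact (hf i).symm
    · rw [Equiv.Perm.viaEmbedding_apply_of_notMem _ _ _ hx]
      have hlt : x.val < 2 := by
        by_contra hc
        exact hx ⟨⟨x.val - 2, by omega⟩, by apply Fin.ext; simp [e]; omega⟩
      rcases (by omega : x.val = 0 ∨ x.val = 1) with h | h
      · obtain rfl : x = 0 := Fin.ext h
        exact h0
      · obtain rfl : x = 1 := Fin.ext h
        exact h1
  rw [hπ]
  have := perm_closure m ((Subgroup.centralizer {x0 (m+2)}).comap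
    ((sec (m+2)).comp (Equiv.Perm.viaEmbeddingHom e))) (fun k hk => by
      rw [Subgroup.mem_comap, Subgroup.mem_centralizer_singleton_iff]
      have : Equiv.Perm.viaEmbeddingHom e (Equiv.swap (⟨k, by omega⟩ : Fin m) ⟨k + 1, hk⟩)
          = Equiv.swap (⟨k + 2, by omega⟩ : Fin (m+2)) ⟨k + 2 + 1, by omega⟩ :=
        viaEmbedding_swap _ _ _
      rw [MonoidHom.comp_apply, this, sec_adj, x0]
      have e1 := rel_rr_far (n := m + 2) (k := 1) (l := k + 2 + 1) le_rfl (by omega) (by omega)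
      have e2 := rel_sr_far (n := m + 2) (k := 1) (l := k + 2 + 1) le_rfl (by omega) (by omega)
      have c1 : Commute (rho (m+2) 1) (rho (m+2) (k+2+1)) := e1
      have c2 : Commute (sigma (m+2) 1) (rho (m+2) (k+2+1)) := e2
      exact (c1.mul_left c2.inv_left).eq.symm) π'
  rw [Subgroup.mem_comap, Subgroup.mem_centralizer_singleton_iff] at this
  exact this

open Classical in
/-- the elements `λ_{i,j}` indexed by `Fin n`; `1` on the diagonal. -/
noncomputable def ell (n : ℕ) (i j : Fin n) : UVB n :=
  if h : ∃ π : Equiv.Perm (Fin n), ∃ h0 : 1 < n, π ⟨0, by omega⟩ = i ∧ π ⟨1, h0⟩ = j then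
    sec n h.choose * x0 n * (sec n h.choose)⁻¹ else 1

lemma ell_spec {n : ℕ} (h : 1 < n) (π : Equiv.Perm (Fin n)) :
    ell n (π ⟨0, by omega⟩) (π ⟨1, h⟩) = sec n π * x0 n * (sec n π)⁻¹ := by
  have hh : ∃ τ : Equiv.Perm (Fin n), ∃ h0 : 1 < n,
      τ ⟨0, by omega⟩ = π ⟨0, by omega⟩ ∧ τ ⟨1, h0⟩ = π ⟨1, h⟩ := ⟨π, h, rfl, rfl⟩
  rw [ell, dif_pos hh]
  obtain ⟨h0, h1, h2⟩ := hh.choose_spec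
  set τ := hh.choose
  obtain ⟨m, rfl⟩ : ∃ m, n = m + 2 := ⟨n - 2, by omega⟩
  have := fix_comm m (π⁻¹ * τ) (by
    rw [Equiv.Perm.mul_apply, Equiv.Perm.inv_eq_iff_eq]; exact h1) (by
    rw [Equiv.Perm.mul_apply, Equiv.Perm.inv_eq_iff_eq]; exact h2)
  rw [map_mul, map_inv] at this
  rw [mul_inv_eq_iff_eq_mul, ← mul_right_inj (sec (m+2) π)⁻¹]
  simp only [mul_assoc, inv_mul_cancel_left] at this ⊢
  exact this

lemma ell_self (n : ℕ) (i : Fin n) : ell n i i = 1 := by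
  rw [ell, dif_neg]
  rintro ⟨π, h0, h1, h2⟩
  have := π.injective (h1.trans h2.symm)
  simp at this

lemma exists_perm {n d : ℕ} (f g : Fin d → Fin n) (hf : Function.Injective f)
    (hg : Function.Injective g) : ∃ π : Equiv.Perm (Fin n), ∀ a, π (f a) = g a := by
  have := Equiv.Perm.isMultiplyPretransitive (Fin n) d
  obtain ⟨π, h⟩ := this.exists_smul_eq ⟨f, hf⟩ ⟨g, hg⟩
  exact ⟨π, fun a => by simpa using congrArg (fun e => e a) h⟩

lemma exists_perm2 {n : ℕ} (h : 1 < n) {i j : Fin n} (hij : i ≠ j) :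
    ∃ π : Equiv.Perm (Fin n), π ⟨0, by omega⟩ = i ∧ π ⟨1, h⟩ = j := by
  obtain ⟨π, hπ⟩ := exists_perm ![(⟨0, by omega⟩ : Fin n), ⟨1, h⟩] ![i, j]
    (by intro a b; fin_cases a <;> fin_cases b <;> simp)
    (by intro a b; fin_cases a <;> fin_cases b <;> simp [hij, hij.symm])
  exact ⟨π, hπ 0, hπ 1⟩

lemma ell_conj {n : ℕ} (π : Equiv.Perm (Fin n)) (i j : Fin n) :
    sec n π * ell n i j * (sec n π)⁻¹ = ell n (π i) (π j) := by
  by_cases hij : i = j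
  · subst hij; simp [ell_self]
  · have h : 1 < n := by
      rcases i with ⟨i, hi⟩; rcases j with ⟨j, hj⟩
      simp only [Fin.mk.injEq] at hij
      omega
    obtain ⟨τ, rfl, rfl⟩ := exists_perm2 h hij
    have := ell_spec h (π * τ)
    rw [Equiv.Perm.mul_apply, Equiv.Perm.mul_apply] at this
    rw [this, ell_spec h τ, map_mul]
    group

lemma ell_conj' {n : ℕ} (π : Equiv.Perm (Fin n)) (i j : Fin n) :
    sec n π * ell n i j = ell n (π i) (π j) * sec n π := by
  rw [← ell_conj]; group

lemma rho_sq {n k : ℕ} (h1 : 1 ≤ k) (h2 : k ≤ n - 1) : (rho n k)⁻¹ = rho n k :=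
  inv_eq_of_mul_eq_one_left (rel_rr h1 h2)

lemma conj_aux {G : Type*} [Group G] {t a b c d : G} (h1 : t * a = b * t) (h2 : t * c = d * t) :
    t * (a * c⁻¹) * t⁻¹ = b * d⁻¹ := by
  obtain rfl : a = t⁻¹ * (b * t) := by rw [← h1]; group
  obtain rfl : c = t⁻¹ * (d * t) := by rw [← h2]; group
  group

lemma ell_adj (n k : ℕ) (hk : k + 1 < n) :
    ell n ⟨k, by omega⟩ ⟨k + 1, hk⟩ = rho n (k + 1) * (sigma n (k + 1))⁻¹ := by
  induction k with
  | zero =>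
    have := ell_spec (n := n) hk 1
    simpa [x0] using this
  | succ k ih =>
    have ih := ih (by omega)
    have h1 := ell_conj (Equiv.swap (⟨k, by omega⟩ : Fin n) ⟨k + 1, by omega⟩ *
      Equiv.swap (⟨k + 1, by omega⟩ : Fin n) ⟨k + 1 + 1, hk⟩) ⟨k, by omega⟩ ⟨k + 1, by omega⟩
    have e1 : (Equiv.swap (⟨k, by omega⟩ : Fin n) ⟨k + 1, by omega⟩ *
      Equiv.swap (⟨k + 1, by omega⟩ : Fin n) ⟨k + 1 + 1, hk⟩) ⟨k, by omega⟩
        = ⟨k + 1, by omega⟩ := by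
      simp [Equiv.swap_apply_def]
      omega
    have e2 : (Equiv.swap (⟨k, by omega⟩ : Fin n) ⟨k + 1, by omega⟩ *
      Equiv.swap (⟨k + 1, by omega⟩ : Fin n) ⟨k + 1 + 1, hk⟩) ⟨k + 1, by omega⟩
        = ⟨k + 1 + 1, by omega⟩ := by
      simp [Equiv.swap_apply_def]
      omega
    rw [e1, e2, ih, map_mul, sec_adj, sec_adj] at h1
    rw [← h1]
    have r1 := rel_rrs (n := n) (k := k + 1) (by omega) (by omega)
    have r2 := rel_rrr (n := n) (k := k + 1) (by omega) (by omega)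
    rw [mul_assoc (rho n (k+1+1))] at r2
    rw [mul_assoc (sigma n (k+1+1))] at r1
    exact conj_aux r2 r1

lemma sigma_ell (n k : ℕ) (hk : k + 1 < n) :
    sigma n (k + 1) = (ell n ⟨k, by omega⟩ ⟨k + 1, hk⟩)⁻¹ * rho n (k + 1) := by
  rw [ell_adj]; group

lemma abstract_comm {G : Type*} [Group G] {r1 r2 s1 s2 a b c : G}
    (hs1 : s1 = a * r1) (hs2 : s2 = c * r2) (e1 : r2 * a = b * r2) (e2 : r1 * c = b * r1)
    (e3 : r1 * b = c * r1) (e4 : r2 * b = a * r2)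
    (br : r1 * r2 * r1 = r2 * r1 * r2)
    (hA : r1 * s2 * s1 = s2 * s1 * r2) (hB : r2 * s1 * s2 = s1 * s2 * r1)
    (hC : s1 * s2 * s1 = s2 * s1 * s2) : a * b = b * a ∧ b * c = c * b ∧ a * c = c * a := by
  subst hs1 hs2
  have e1' : ∀ x, r2 * (a * x) = b * (r2 * x) := fun x => by rw [← mul_assoc, e1, mul_assoc]
  have e2' : ∀ x, r1 * (c * x) = b * (r1 * x) := fun x => by rw [← mul_assoc, e2, mul_assoc]
  have e3' : ∀ x, r1 * (b * x) = c * (r1 * x) := fun x => by rw [← mul_assoc, e3, mul_assoc]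
  have e4' : ∀ x, r2 * (b * x) = a * (r2 * x) := fun x => by rw [← mul_assoc, e4, mul_assoc]
  simp only [mul_assoc, e1', e2', e3', e4'] at hA hB hC br
  rw [br] at hA hC
  rw [br] at hB
  simp only [← mul_assoc, mul_left_inj] at hA hB hC
  refine ⟨hB.symm, hA, ?_⟩
  rw [hB.symm] at hC
  rw [← hA] at hC
  simpa [mul_assoc] using hC

end UVBProof

namespace UVBProof

open UVB

lemma ell_conj_inv {n : ℕ} (π : Equiv.Perm (Fin n)) (i j : Fin n) :
    sec n π * (ell n i j)⁻¹ = (ell n (π i) (π j))⁻¹ * sec n π := by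
  rw [← ell_conj]; group

lemma comm3_base {n : ℕ} (h : 2 < n) :
    Commute (ell n ⟨0, by omega⟩ ⟨1, by omega⟩) (ell n ⟨0, by omega⟩ ⟨2, h⟩) ∧
    Commute (ell n ⟨0, by omega⟩ ⟨2, h⟩) (ell n ⟨1, by omega⟩ ⟨2, h⟩) ∧
    Commute (ell n ⟨0, by omega⟩ ⟨1, by omega⟩) (ell n ⟨1, by omega⟩ ⟨2, h⟩) := by
  have s1 := sec_adj n 0 (by omega)
  have s2 := sec_adj n 1 (by omega)
  have e1 := ell_conj_inv (Equiv.swap (⟨1, by omega⟩ : Fin n) ⟨1 + 1, by omega⟩)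
    ⟨0, by omega⟩ ⟨1, by omega⟩
  have e2 := ell_conj_inv (Equiv.swap (⟨0, by omega⟩ : Fin n) ⟨0 + 1, by omega⟩)
    ⟨1, by omega⟩ ⟨2, by omega⟩
  have e3 := ell_conj_inv (Equiv.swap (⟨0, by omega⟩ : Fin n) ⟨0 + 1, by omega⟩)
    ⟨0, by omega⟩ ⟨2, by omega⟩
  have e4 := ell_conj_inv (Equiv.swap (⟨1, by omega⟩ : Fin n) ⟨1 + 1, by omega⟩)
    ⟨0, by omega⟩ ⟨2, by omega⟩
  rw [s2] at e1 e4
  rw [s1] at e2 e3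
  simp [Equiv.swap_apply_def] at e1 e2 e3 e4
  obtain ⟨h1, h2, h3⟩ := abstract_comm (sigma_ell n 0 (by omega)) (sigma_ell n 1 (by omega))
    e1 e2 e3 e4 (rel_rrr (by omega) (by omega)) (rel_rss (by omega) (by omega))
    (rel_rss' (by omega) (by omega)) (rel_sss (by omega) (by omega))
  have h1 : Commute _ _ := h1
  have h2 : Commute _ _ := h2
  have h3 : Commute _ _ := h3
  rw [Commute.inv_inv_iff] at h1 h2 h3
  exact ⟨h1, h2, h3⟩

lemma comm_transport {n : ℕ} (π : Equiv.Perm (Fin n)) {i j k l : Fin n}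
    (h : Commute (ell n i j) (ell n k l)) :
    Commute (ell n (π i) (π j)) (ell n (π k) (π l)) := by
  rw [← ell_conj, ← ell_conj]
  exact (Commute.conj_iff _).mpr h

lemma comm3 {n : ℕ} {i j k : Fin n} (hij : i ≠ j) (hik : i ≠ k) (hjk : j ≠ k) :
    Commute (ell n i j) (ell n i k) ∧ Commute (ell n i k) (ell n j k) ∧
    Commute (ell n i j) (ell n j k) := by
  have h : 2 < n := by
    rcases i with ⟨i, hi⟩; rcases j with ⟨j, hj⟩; rcases k with ⟨k, hk⟩
    simp only [ne_eq, Fin.mk.injEq] at hij hik hjk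
    omega
  obtain ⟨π, hπ⟩ := exists_perm ![(⟨0, by omega⟩ : Fin n), ⟨1, by omega⟩, ⟨2, h⟩] ![i, j, k]
    (by intro a b; fin_cases a <;> fin_cases b <;> simp)
    (by intro a b; fin_cases a <;> fin_cases b <;>
          simp [hij, hij.symm, hik, hik.symm, hjk, hjk.symm])
  have h0 : π ⟨0, by omega⟩ = i := hπ 0
  have h1 : π ⟨1, by omega⟩ = j := hπ 1
  have h2 : π ⟨2, by omega⟩ = k := hπ 2
  subst h0 h1 h2
  obtain ⟨a, b, c⟩ := comm3_base h
  exact ⟨comm_transport π a, comm_transport π b, comm_transport π c⟩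

lemma comm4 {n : ℕ} {i j k l : Fin n} (hij : i ≠ j) (hik : i ≠ k) (hil : i ≠ l) (hjk : j ≠ k)
    (hjl : j ≠ l) (hkl : k ≠ l) : Commute (ell n i j) (ell n k l) := by
  have h : 3 < n := by
    rcases i with ⟨i, hi⟩; rcases j with ⟨j, hj⟩; rcases k with ⟨k, hk⟩; rcases l with ⟨l, hl⟩
    simp only [ne_eq, Fin.mk.injEq] at *
    omega
  obtain ⟨π, hπ⟩ := exists_perm ![(⟨0, by omega⟩ : Fin n), ⟨1, by omega⟩, ⟨2, by omega⟩, ⟨3, h⟩]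
    ![i, j, k, l]
    (by intro a b; fin_cases a <;> fin_cases b <;> simp)
    (by intro a b; fin_cases a <;> fin_cases b <;>
          simp [hij, hij.symm, hik, hik.symm, hjk, hjk.symm, hil, hil.symm, hjl, hjl.symm,
            hkl, hkl.symm])
  have h0 : π ⟨0, by omega⟩ = i := hπ 0
  have h1 : π ⟨1, by omega⟩ = j := hπ 1
  have h2 : π ⟨2, by omega⟩ = k := hπ 2
  have h3 : π ⟨3, by omega⟩ = l := hπ 3
  subst h0 h1 h2 h3
  apply comm_transport
  have a1 := ell_adj n 0 (by omega)
  have a2 := ell_adj n 2 (by omega)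
  simp only [zero_add] at a1
  rw [a1, a2]
  have c1 : Commute (rho n 1) (rho n (2+1)) := rel_rr_far (by omega) (by omega) (by omega)
  have c2 : Commute (sigma n 1) (rho n (2+1)) := rel_sr_far (by omega) (by omega) (by omega)
  have c3 : Commute (sigma n (2+1)) (rho n 1) := rel_rs_far (by omega) (by omega) (by omega)
  have c4 : Commute (sigma n 1) (sigma n (2+1)) := rel_ss_far (by omega) (by omega) (by omega)
  exact (c1.mul_right c3.symm.inv_right).mul_left (c2.inv_left.mul_right c4.inv_inv)

/-- the RAAG relations in the pure group -/
lemma ell_comm {n : ℕ} {i j k l : Fin n} (hij : i ≠ j) (hkl : k ≠ l)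
    (h1 : ¬ (i = k ∧ j = l)) (h2 : ¬ (i = l ∧ j = k)) : Commute (ell n i j) (ell n k l) := by
  by_cases hik : i = k
  · subst hik
    exact (comm3 hij hkl (by tauto)).1
  by_cases hjl : j = l
  · subst hjl
    exact (comm3 hik hij hkl).2.1
  by_cases hjk : j = k
  · subst hjk
    exact (comm3 hij (by tauto) hjl).2.2
  by_cases hil : i = l
  · subst hil
    exact (comm3 hkl (by tauto) hij).2.2.symm
  exact comm4 hij hik hil hjk hjl hkl

/-- extension of a permutation by a fixed point -/
noncomputable def ext1 (n : ℕ) : Equiv.Perm (Fin n) →* Equiv.Perm (Fin (n + 1)) :=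
  Equiv.Perm.viaEmbeddingHom Fin.castSuccEmb

lemma ext1_castSucc {n : ℕ} (π : Equiv.Perm (Fin n)) (i : Fin n) :
    ext1 n π i.castSucc = (π i).castSucc :=
  Equiv.Perm.viaEmbedding_apply π Fin.castSuccEmb i

lemma ext1_last {n : ℕ} (π : Equiv.Perm (Fin n)) : ext1 n π (Fin.last n) = Fin.last n := by
  apply Equiv.Perm.viaEmbedding_apply_of_notMem
  rintro ⟨i, hi⟩
  exact (Fin.castSucc_lt_last i).ne hi

lemma ext1_swap {n : ℕ} (i j : Fin n) :
    ext1 n (Equiv.swap i j) = Equiv.swap i.castSucc j.castSucc :=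
  viaEmbedding_swap _ _ _

lemma incl_sec {n : ℕ} (π : Equiv.Perm (Fin n)) : incl n (sec n π) = sec (n + 1) (ext1 n π) := by
  have : (incl n).comp (sec n) = (sec (n+1)).comp (ext1 n) := by
    apply perm_hom_ext
    intro k hk
    simp only [MonoidHom.comp_apply]
    rw [sec_adj, incl_rho _ _ (by omega) (by omega), ext1_swap]
    exact (sec_adj (n + 1) k (by omega)).symm
  exact congrArg (fun f => f π) this

lemma incl_ell {n : ℕ} (i j : Fin n) :
    incl n (ell n i j) = ell (n + 1) i.castSucc j.castSucc := by
  by_cases hij : i = j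
  · subst hij; simp [ell_self]
  · have h : 1 < n := by
      rcases i with ⟨i, hi⟩; rcases j with ⟨j, hj⟩
      simp only [Fin.mk.injEq] at hij
      omega
    obtain ⟨π, rfl, rfl⟩ := exists_perm2 h hij
    rw [ell_spec h, ← ext1_castSucc, ← ext1_castSucc]
    have := ell_spec (n := n + 1) (by omega) (ext1 n π)
    refine Eq.trans ?_ this.symm
    rw [map_mul, map_mul, map_inv, incl_sec, x0, x0, map_mul, map_inv, incl_rho _ _ le_rfl (by omega),
      incl_sigma _ _ le_rfl (by omega)]

end UVBProof

namespace UVBProof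

open UVB

/-- The model group: integer matrices with permutations. -/
@[ext] structure WM (n : ℕ) where
  mat : Fin n → Fin n → ℤ
  perm : Equiv.Perm (Fin n)

/-- permutation action on matrices -/
def act {n : ℕ} (π : Equiv.Perm (Fin n)) (M : Fin n → Fin n → ℤ) : Fin n → Fin n → ℤ :=
  fun i j => M (π⁻¹ i) (π⁻¹ j)

section act
variable {n : ℕ}

@[simp] lemma act_one (M : Fin n → Fin n → ℤ) : act 1 M = M := rfl
lemma act_mul (π τ : Equiv.Perm (Fin n)) (M : Fin n → Fin n → ℤ) :
    act (π * τ) M = act π (act τ M) := by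
  funext i j; simp [act, mul_inv_rev]
@[simp] lemma act_add (π : Equiv.Perm (Fin n)) (M N : Fin n → Fin n → ℤ) :
    act π (M + N) = act π M + act π N := rfl
@[simp] lemma act_neg (π : Equiv.Perm (Fin n)) (M : Fin n → Fin n → ℤ) :
    act π (-M) = -act π M := rfl
@[simp] lemma act_zero (π : Equiv.Perm (Fin n)) : act π (0 : Fin n → Fin n → ℤ) = 0 := rfl

/-- elementary matrix -/
def El (i j : Fin n) : Fin n → Fin n → ℤ := fun a b => if a = i ∧ b = j then 1 else 0

lemma act_El (π : Equiv.Perm (Fin n)) (i j : Fin n) : act π (El i j) = El (π i) (π j) := by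
  funext a b
  simp only [act, El, Equiv.Perm.inv_eq_iff_eq]

end act

instance (n : ℕ) : Mul (WM n) := ⟨fun a b => ⟨a.mat + act a.perm b.mat, a.perm * b.perm⟩⟩
instance (n : ℕ) : One (WM n) := ⟨⟨0, 1⟩⟩
instance (n : ℕ) : Inv (WM n) := ⟨fun a => ⟨-act a.perm⁻¹ a.mat, a.perm⁻¹⟩⟩

section
variable {n : ℕ}
@[simp] lemma WM.mul_mat (a b : WM n) : (a * b).mat = a.mat + act a.perm b.mat := rfl
@[simp] lemma WM.mul_perm (a b : WM n) : (a * b).perm = a.perm * b.perm := rfl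
@[simp] lemma WM.one_mat : (1 : WM n).mat = 0 := rfl
@[simp] lemma WM.one_perm : (1 : WM n).perm = 1 := rfl
@[simp] lemma WM.inv_mat (a : WM n) : (a⁻¹).mat = -act a.perm⁻¹ a.mat := rfl
@[simp] lemma WM.inv_perm (a : WM n) : (a⁻¹).perm = a.perm⁻¹ := rfl
end

instance (n : ℕ) : Group (WM n) where
  mul_assoc a b c := by
    apply WM.ext <;> simp [act_mul, mul_assoc, add_assoc]
  one_mul a := by apply WM.ext <;> simp
  mul_one a := by apply WM.ext <;> simp
  inv_mul_cancel a := by apply WM.ext <;> simp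

/-- images of the generators in the model -/
def modelGen (n : ℕ) : UVBGen n → WM n
  | Sum.inl i => ⟨-El ⟨i.val, by omega⟩ ⟨i.val + 1, by omega⟩,
      Equiv.swap ⟨i.val, by omega⟩ ⟨i.val + 1, by omega⟩⟩
  | Sum.inr i => ⟨0, Equiv.swap ⟨i.val, by omega⟩ ⟨i.val + 1, by omega⟩⟩

lemma swap_braid {A : Type*} [DecidableEq A] {p q r : A} (hpq : p ≠ q) (hpr : p ≠ r)
    (hqr : q ≠ r) : Equiv.swap p q * Equiv.swap q r * Equiv.swap p q =
      Equiv.swap q r * Equiv.swap p q * Equiv.swap q r := by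
  rw [Equiv.swap_mul_swap_mul_swap hpq hpr, Equiv.swap_comm p q, Equiv.swap_comm q r,
    Equiv.swap_mul_swap_mul_swap hqr.symm hpr.symm, Equiv.swap_comm]

lemma modelGen_rels (n : ℕ) : ∀ r ∈ uvbRels n, FreeGroup.lift (modelGen n) r = 1 := by
  have hs : ∀ i : Fin (n - 1), FreeGroup.lift (modelGen n) (UVBGen.sg i) =
    modelGen n (Sum.inl i) := fun i => by simp [UVBGen.sg]
  have hr : ∀ i : Fin (n - 1), FreeGroup.lift (modelGen n) (UVBGen.rg i) =
    modelGen n (Sum.inr i) := fun i => by simp [UVBGen.rg]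
  rintro r (⟨⟨i, hi⟩, ⟨j, hj⟩, hij, hc⟩ | ⟨⟨i, hi⟩, ⟨j, hj⟩, hij, hc⟩ | ⟨i, rfl⟩)
  · simp only at hij
    subst hij
    have n1 : (⟨i, by omega⟩ : Fin n) ≠ ⟨i + 1, by omega⟩ := by simp
    have n2 : (⟨i, by omega⟩ : Fin n) ≠ ⟨i + 1 + 1, by omega⟩ := by simp; omega
    have n3 : (⟨i + 1, by omega⟩ : Fin n) ≠ ⟨i + 1 + 1, by omega⟩ := by simp
    have br := swap_braid n1 n2 n3
    rcases hc with h | h | h | h | h <;> subst h <;>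
      rw [map_mul, map_inv, mul_inv_eq_one] <;>
      simp only [map_mul, hs, hr, modelGen] <;>
      refine WM.ext ?_ ?_ <;>
      simp only [WM.mul_mat, WM.mul_perm, Equiv.Perm.mul_apply, act_neg, act_El, act_zero, br,
        Equiv.swap_apply_left, Equiv.swap_apply_right, Equiv.swap_apply_of_ne_of_ne n1 n2,
        Equiv.swap_apply_of_ne_of_ne n2.symm n3.symm] <;>
      abel
  · simp only at hij
    have n0 : i ≠ j := by omega
    have n1 : (⟨i, by omega⟩ : Fin n) ≠ ⟨j, by omega⟩ := by simp; omega
    have n2 : (⟨i, by omega⟩ : Fin n) ≠ ⟨j + 1, by omega⟩ := by simp; omega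
    have n3 : (⟨i + 1, by omega⟩ : Fin n) ≠ ⟨j, by omega⟩ := by simp; omega
    have n4 : (⟨i + 1, by omega⟩ : Fin n) ≠ ⟨j + 1, by omega⟩ := by simp; omega
    have br : Equiv.swap (⟨i, by omega⟩ : Fin n) ⟨i + 1, by omega⟩ *
      Equiv.swap (⟨j, by omega⟩ : Fin n) ⟨j + 1, by omega⟩ =
      Equiv.swap (⟨j, by omega⟩ : Fin n) ⟨j + 1, by omega⟩ *
      Equiv.swap (⟨i, by omega⟩ : Fin n) ⟨i + 1, by omega⟩ := by
      apply Equiv.Perm.Disjoint.commute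
      intro x
      by_cases h1 : x = ⟨i, by omega⟩
      · right; rw [h1]; exact Equiv.swap_apply_of_ne_of_ne n1 n2
      by_cases h2 : x = ⟨i + 1, by omega⟩
      · right; rw [h2]; exact Equiv.swap_apply_of_ne_of_ne n3 n4
      left; exact Equiv.swap_apply_of_ne_of_ne h1 h2
    rcases hc with h | h | h <;> subst h <;>
      rw [map_mul, map_inv, mul_inv_eq_one] <;>
      simp only [map_mul, hs, hr, modelGen] <;>
      refine WM.ext ?_ ?_ <;>
      simp only [WM.mul_mat, WM.mul_perm, Equiv.Perm.mul_apply, act_neg, act_El, act_zero, br,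
        Equiv.swap_apply_of_ne_of_ne n1 n2, Equiv.swap_apply_of_ne_of_ne n3 n4,
        Equiv.swap_apply_of_ne_of_ne n1.symm n3.symm,
        Equiv.swap_apply_of_ne_of_ne n2.symm n4.symm] <;>
      abel
  · rw [map_mul, hr]
    apply WM.ext <;> simp [modelGen]

/-- homomorphism to the model -/
def model (n : ℕ) : UVB n →* WM n := PresentedGroup.toGroup (modelGen_rels n)

lemma model_sigma (n k : ℕ) (hk : k + 1 < n) : model n (sigma n (k + 1)) =
    ⟨-El ⟨k, by omega⟩ ⟨k + 1, hk⟩, Equiv.swap ⟨k, by omega⟩ ⟨k + 1, hk⟩⟩ := by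
  have h : 1 ≤ k + 1 ∧ k + 1 ≤ n - 1 := by omega
  rw [sigma, dif_pos h, model, PresentedGroup.toGroup.of]
  rfl

lemma model_rho (n k : ℕ) (hk : k + 1 < n) : model n (rho n (k + 1)) =
    ⟨0, Equiv.swap ⟨k, by omega⟩ ⟨k + 1, hk⟩⟩ := by
  have h : 1 ≤ k + 1 ∧ k + 1 ≤ n - 1 := by omega
  rw [rho, dif_pos h, model, PresentedGroup.toGroup.of]
  rfl

lemma model_sec (n : ℕ) (π : Equiv.Perm (Fin n)) : model n (sec n π) = ⟨0, π⟩ := by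
  let f : Equiv.Perm (Fin n) →* WM n := MonoidHom.mk' (fun π => ⟨0, π⟩) (by
    intro a b; apply WM.ext <;> simp)
  have : (model n).comp (sec n) = f := by
    apply perm_hom_ext
    intro k hk
    rw [MonoidHom.comp_apply, sec_adj, model_rho n k hk]
    rfl
  exact congrArg (fun f => f π) this

lemma model_ell {n : ℕ} {i j : Fin n} (hij : i ≠ j) : model n (ell n i j) = ⟨El i j, 1⟩ := by
  have h : 1 < n := by
    rcases i with ⟨i, hi⟩; rcases j with ⟨j, hj⟩
    simp only [ne_eq, Fin.mk.injEq] at hij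
    omega
  obtain ⟨π, rfl, rfl⟩ := exists_perm2 h hij
  have e1 := model_rho n 0 h
  have e2 := model_sigma n 0 h
  simp only [zero_add] at e1 e2
  rw [ell_spec h, x0, map_mul, map_mul, map_mul, map_inv, map_inv, model_sec, e1, e2]
  apply WM.ext <;> simp [act_El]

/-- the permutation map -/
def perm {n : ℕ} (g : UVB n) : Equiv.Perm (Fin n) := (model n g).perm
/-- the matrix cocycle -/
def mat {n : ℕ} (g : UVB n) : Fin n → Fin n → ℤ := (model n g).mat

section
variable {n : ℕ}
lemma perm_mul (a b : UVB n) : perm (a * b) = perm a * perm b := by simp [perm]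
lemma perm_inv (a : UVB n) : perm a⁻¹ = (perm a)⁻¹ := by simp [perm]
lemma perm_one : perm (1 : UVB n) = 1 := by simp [perm]
lemma mat_mul (a b : UVB n) : mat (a * b) = mat a + act (perm a) (mat b) := by simp [perm, mat]
lemma mat_inv (a : UVB n) : mat a⁻¹ = -act (perm a)⁻¹ (mat a) := by simp [perm, mat]
lemma mat_one : mat (1 : UVB n) = 0 := by simp [mat]
lemma perm_sec (π : Equiv.Perm (Fin n)) : perm (sec n π) = π := by simp [perm, model_sec]
lemma mat_sec (π : Equiv.Perm (Fin n)) : mat (sec n π) = 0 := by simp [mat, model_sec]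
lemma perm_ell (i j : Fin n) : perm (ell n i j) = 1 := by
  by_cases h : i = j
  · subst h; simp [ell_self, perm_one]
  · simp [perm, model_ell h]
lemma mat_ell {i j : Fin n} (h : i ≠ j) : mat (ell n i j) = El i j := by
  simp [mat, model_ell h]
end

/-- the pure group as a closure -/
def Lgen (n : ℕ) : Set (UVB n) := {x | ∃ i j, i ≠ j ∧ x = ell n i j}

lemma mem_L (n : ℕ) (g : UVB n) : g * (sec n (perm g))⁻¹ ∈ Subgroup.closure (Lgen n) := by
  have conj : ∀ π, ∀ x ∈ Subgroup.closure (Lgen n), sec n π * x * (sec n π)⁻¹ ∈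
      Subgroup.closure (Lgen n) := by
    intro π x hx
    have : Subgroup.closure (Lgen n) ≤ (Subgroup.closure (Lgen n)).comap
        (MulAut.conj (sec n π)).toMonoidHom := by
      rw [Subgroup.closure_le]
      rintro _ ⟨i, j, hij, rfl⟩
      change sec n π * ell n i j * (sec n π)⁻¹ ∈ Subgroup.closure (Lgen n)
      rw [ell_conj]
      exact Subgroup.subset_closure ⟨_, _, fun h => hij (π.injective h), rfl⟩
    exact this hx
  let H : Subgroup (UVB n) :=
    { carrier := {g | g * (sec n (perm g))⁻¹ ∈ Subgroup.closure (Lgen n)}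
      one_mem' := by simp [perm_one, one_mem]
      mul_mem' := by
        intro a b ha hb
        simp only [Set.mem_ofPred_eq] at *
        have := mul_mem ha (conj (perm a) _ hb)
        rw [perm_mul, map_mul]
        convert this using 1
        group
      inv_mem' := by
        intro a ha
        simp only [Set.mem_ofPred_eq] at *
        have := conj (perm a)⁻¹ _ (inv_mem ha)
        rw [perm_inv]
        convert this using 1
        simp only [map_inv]
        group }
  apply uvb_generated H
  · intro k h1 h2
    obtain ⟨k, rfl⟩ : ∃ k', k = k' + 1 := ⟨k - 1, by omega⟩
    change sigma n (k + 1) * (sec n (perm (sigma n (k + 1))))⁻¹ ∈ Subgroup.closure (Lgen n)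
    have hk : k + 1 < n := by omega
    have hp : perm (sigma n (k+1)) = Equiv.swap ⟨k, by omega⟩ ⟨k + 1, hk⟩ := by
      rw [perm, model_sigma n k hk]
    rw [hp, sec_adj, sigma_ell n k hk, mul_inv_cancel_right]
    exact inv_mem (Subgroup.subset_closure ⟨_, _, by simp, rfl⟩)
  · intro k h1 h2
    obtain ⟨k, rfl⟩ : ∃ k', k = k' + 1 := ⟨k - 1, by omega⟩
    change rho n (k + 1) * (sec n (perm (rho n (k + 1))))⁻¹ ∈ Subgroup.closure (Lgen n)
    have hk : k + 1 < n := by omega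
    have hp : perm (rho n (k+1)) = Equiv.swap ⟨k, by omega⟩ ⟨k + 1, hk⟩ := by
      rw [perm, model_rho n k hk]
    rw [hp, sec_adj, mul_inv_cancel]
    exact one_mem _

lemma pure_mem {n : ℕ} {g : UVB n} (h : perm g = 1) : g ∈ Subgroup.closure (Lgen n) := by
  have := mem_L n g
  rwa [h, map_one, inv_one, mul_one] at this

end UVBProof

namespace UVBProof

open UVB

lemma _root_.Markov.refl' (p : Σ n, UVB n) : Markov p p := Relation.EqvGen.refl p
lemma _root_.Markov.symm' {p q : Σ n, UVB n} (h : Markov p q) : Markov q p := Relation.EqvGen.symm _ _ h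
lemma _root_.Markov.trans' {p q r : Σ n, UVB n} (h : Markov p q) (h' : Markov q r) : Markov p r :=
  Relation.EqvGen.trans _ _ _ h h'
lemma markov_conj {n : ℕ} (α γ : UVB n) : Markov ⟨n, α⟩ ⟨n, γ * α * γ⁻¹⟩ :=
  Relation.EqvGen.rel _ _ (MarkovBase.conj n α γ)
lemma markov_comm {n : ℕ} (a b : UVB n) : Markov ⟨n, a * b⟩ ⟨n, b * a⟩ := by
  have := markov_conj (a * b) b
  rwa [show b * (a * b) * b⁻¹ = b * a by group] at this

/-- general virtual stabilization at strand `i` -/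
lemma markov_stab {n : ℕ} (α : UVB n) (i : Fin n) :
    Markov ⟨n, α⟩ ⟨n + 1, incl n α * sec (n + 1) (Equiv.swap i.castSucc (Fin.last n))⟩ := by
  obtain ⟨m, rfl⟩ : ∃ m, n = m + 1 := ⟨n - 1, by have := i.isLt; omega⟩
  set π : Equiv.Perm (Fin (m + 1)) := Equiv.swap i (Fin.last m) with hπ
  have h1 := markov_conj α (sec (m + 1) π)
  have h2 : Markov ⟨m + 1, sec (m + 1) π * α * (sec (m + 1) π)⁻¹⟩ _ :=
    Relation.EqvGen.rel _ _ (MarkovBase.stabVirt _ _)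
  have h3 := markov_conj (incl (m+1) (sec (m + 1) π * α * (sec (m + 1) π)⁻¹) *
    rho (m + 1 + 1) (m + 1)) (sec (m + 2) (ext1 (m + 1) π))⁻¹
  have e : (sec (m + 2) (ext1 (m + 1) π))⁻¹ * (incl (m+1) (sec (m + 1) π * α * (sec (m + 1) π)⁻¹) *
    rho (m + 1 + 1) (m + 1)) * (sec (m + 2) (ext1 (m + 1) π))⁻¹⁻¹ =
    incl (m + 1) α * sec (m + 2) (Equiv.swap i.castSucc (Fin.last (m + 1))) := by
    have hr : rho (m + 1 + 1) (m + 1) = sec (m + 2)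
        (Equiv.swap (Fin.last m).castSucc (Fin.last (m + 1))) :=
      (sec_adj (m + 2) m (by omega)).symm
    have hsw : Equiv.swap i.castSucc (Fin.last (m + 1)) = (ext1 (m + 1) π)⁻¹ *
        Equiv.swap (Fin.last m).castSucc (Fin.last (m + 1)) * (ext1 (m + 1) π) := by
      have := Equiv.swap_apply_apply (ext1 (m + 1) π)⁻¹ (Fin.last m).castSucc (Fin.last (m + 1))
      rw [inv_inv] at this
      rw [← this]
      congr 1
      · rw [← map_inv, ext1_castSucc, hπ]; simp
      · rw [← map_inv, ext1_last]
    rw [hsw, hr]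
    simp only [map_mul, map_inv, incl_sec]
    group
  rw [e] at h3
  exact (h1.trans' h2).trans' h3

lemma incl_comm_last {n : ℕ} {α : UVB n} (hα : α ∈ Subgroup.closure (Lgen n))
    {a b : Fin (n + 1)} (hab : a ≠ b) (h : a = Fin.last n ∨ b = Fin.last n) :
    Commute (incl n α) (ell (n + 1) a b) := by
  have : Subgroup.closure (Lgen n) ≤
      (Subgroup.centralizer {ell (n + 1) a b}).comap (incl n) := by
    rw [Subgroup.closure_le]
    rintro _ ⟨i, j, hij, rfl⟩
    change incl n (ell n i j) ∈ Subgroup.centralizer _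
    rw [Subgroup.mem_centralizer_singleton_iff, incl_ell]
    have hi := (Fin.castSucc_lt_last i).ne
    have hj := (Fin.castSucc_lt_last j).ne
    apply ell_comm (by simpa using hij) hab
    · rintro ⟨rfl, rfl⟩; rcases h with h | h <;> contradiction
    · rintro ⟨rfl, rfl⟩; rcases h with h | h <;> contradiction
  exact Subgroup.mem_centralizer_singleton_iff.mp (this hα)

lemma incl_closure {n : ℕ} {α : UVB n} (hα : α ∈ Subgroup.closure (Lgen n)) :
    incl n α ∈ Subgroup.closure (Lgen (n + 1)) := by
  have : Subgroup.closure (Lgen n) ≤ (Subgroup.closure (Lgen (n + 1))).comap (incl n) := by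
    rw [Subgroup.closure_le]
    rintro _ ⟨i, j, hij, rfl⟩
    change incl n (ell n i j) ∈ Subgroup.closure (Lgen (n + 1))
    rw [incl_ell]
    exact Subgroup.subset_closure ⟨_, _, by simpa using hij, rfl⟩
  exact this hα

lemma key_step1 {n : ℕ} (α : UVB n) (l a b c d : Fin n) {a' b' c' d' : Fin (n + 1)}
    (ha : Equiv.swap l.castSucc (Fin.last n) a' = a.castSucc)
    (hb : Equiv.swap l.castSucc (Fin.last n) b' = b.castSucc)
    (hc : Equiv.swap l.castSucc (Fin.last n) c' = c.castSucc)
    (hd : Equiv.swap l.castSucc (Fin.last n) d' = d.castSucc)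
    (h1 : Commute (incl n α) (ell (n + 1) a' b')) (h2 : Commute (incl n α) (ell (n + 1) c' d')) :
    Markov ⟨n, α * (ell n a b * ell n c d)⟩
      ⟨n + 1, incl n α * (ell (n + 1) a' b' * ell (n + 1) c' d') *
        sec (n + 1) (Equiv.swap l.castSucc (Fin.last n))⟩ := by
  have s1 := markov_stab (α * (ell n a b * ell n c d)) l
  have e1 := ell_conj' (Equiv.swap l.castSucc (Fin.last n)) a' b'
  have e2 := ell_conj' (Equiv.swap l.castSucc (Fin.last n)) c' d'
  rw [ha, hb] at e1
  rw [hc, hd] at e2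
  set t := sec (n + 1) (Equiv.swap l.castSucc (Fin.last n))
  rw [map_mul, map_mul, incl_ell, incl_ell] at s1
  have e3 : incl n α * (ell (n + 1) a.castSucc b.castSucc * ell (n + 1) c.castSucc d.castSucc) * t
      = (incl n α * t) * (ell (n + 1) a' b' * ell (n + 1) c' d') := by
    rw [mul_assoc, mul_assoc, mul_assoc, ← e2, ← mul_assoc (ell _ _ _) t, ← e1, mul_assoc]
  rw [e3] at s1
  have s2 := s1.trans' (markov_comm _ _)
  rwa [← mul_assoc (ell (n + 1) a' b' * ell (n + 1) c' d') (incl n α) t, ← (h1.mul_right h2).eq] at s2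

lemma key_swap {n : ℕ} {α : UVB n} (hα : α ∈ Subgroup.closure (Lgen n)) {k l : Fin n}
    (hkl : k ≠ l) :
    Markov ⟨n, α * (ell n k l * ell n l k)⟩ ⟨n, α * (ell n l k * ell n k l)⟩ := by
  have hk := (Fin.castSucc_lt_last k).ne
  have hl := (Fin.castSucc_lt_last l).ne
  have hkl' : k.castSucc ≠ l.castSucc := by simpa using hkl
  have c1 : Commute (incl n α) (ell (n + 1) k.castSucc (Fin.last n)) :=
    incl_comm_last hα hk (Or.inr rfl)
  have c2 : Commute (incl n α) (ell (n + 1) (Fin.last n) k.castSucc) :=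
    incl_comm_last hα hk.symm (Or.inl rfl)
  have f1 : Equiv.swap l.castSucc (Fin.last n) k.castSucc = k.castSucc :=
    Equiv.swap_apply_of_ne_of_ne hkl' hk
  have f2 : Equiv.swap l.castSucc (Fin.last n) (Fin.last n) = l.castSucc :=
    Equiv.swap_apply_right _ _
  have s1 := key_step1 α l k l l k f1 f2 f2 f1 c1 c2
  have s2 := key_step1 α l l k k l f2 f1 f1 f2 c2 c1
  refine (s1.trans' ?_).trans' s2.symm'
  refine ((markov_stab _ k.castSucc).trans' ?_).trans' (markov_stab _ k.castSucc).symm'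
  simp only [map_mul, incl_ell, incl_sec, ext1_swap]
  have d1 := c1.map (incl (n + 1))
  have d2 := c2.map (incl (n + 1))
  rw [incl_ell] at d1 d2
  set K := k.castSucc.castSucc
  set L := l.castSucc.castSucc
  set P := (Fin.last n).castSucc
  set Q := Fin.last (n + 1)
  have hKP : K ≠ P := by simpa [K, P] using hk
  have hLP : L ≠ P := by simpa [L, P] using hl
  have hKL : K ≠ L := by simpa [K, L] using hkl
  have hKQ : K ≠ Q := (Fin.castSucc_lt_last _).ne
  have hLQ : L ≠ Q := (Fin.castSucc_lt_last _).ne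
  have hPQ : P ≠ Q := (Fin.castSucc_lt_last _).ne
  have d3 : Commute (incl (n + 1) (incl n α)) (ell (n + 2) L Q) :=
    incl_comm_last (incl_closure hα) hLQ (Or.inr rfl)
  have d4 : Commute (ell (n + 2) K P) (ell (n + 2) L Q) :=
    ell_comm hKP hLQ (fun h => hKL h.1) (fun h => hKQ h.1)
  have e1 := ell_conj' (Equiv.swap L P * Equiv.swap K Q) L Q
  have e2 := ell_conj' (Equiv.swap L P * Equiv.swap K Q) P K
  have g1 : (Equiv.swap L P * Equiv.swap K Q) L = P := by
    simp [Equiv.swap_apply_of_ne_of_ne hKL.symm hLQ]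
  have g2 : (Equiv.swap L P * Equiv.swap K Q) Q = K := by
    simp [Equiv.swap_apply_of_ne_of_ne hKL hKP]
  have g3 : (Equiv.swap L P * Equiv.swap K Q) P = L := by
    simp [Equiv.swap_apply_of_ne_of_ne hKP.symm hPQ]
  have g4 : (Equiv.swap L P * Equiv.swap K Q) K = Q := by
    simp [Equiv.swap_apply_of_ne_of_ne hLQ.symm hPQ.symm]
  rw [g1, g2] at e1
  rw [g3, g4] at e2
  rw [mul_assoc _ (sec (n + 2) _) (sec (n + 2) _), mul_assoc _ (sec (n + 2) _) (sec (n + 2) _),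
    ← map_mul]
  generalize sec (n + 2) (Equiv.swap L P * Equiv.swap K Q) = t at *
  generalize incl (n + 1) (incl n α) = A at *
  generalize ell (n + 2) K P = x at *
  generalize ell (n + 2) P K = y at *
  generalize ell (n + 2) L Q = z at *
  have h1 : A * (x * y) * t = (A * x * t) * z := by
    rw [mul_assoc (A * x), e1]; group
  have h2 : z * (A * x * t) = (A * x * t) * y := by
    rw [mul_assoc (A * x), e2, ← mul_assoc z, ((d3.mul_left d4)).symm.eq, mul_assoc]
  have h3 : y * (A * x * t) = A * (y * x) * t := by
    rw [← mul_assoc, ← mul_assoc, ← d2.eq]; group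
  rw [h1]
  refine (markov_comm _ _).trans' ?_
  rw [h2]
  refine (markov_comm _ _).trans' ?_
  rw [h3]
  exact Markov.refl' _

lemma perm_of_closure {n : ℕ} {α : UVB n} (hα : α ∈ Subgroup.closure (Lgen n)) : perm α = 1 := by
  induction hα using Subgroup.closure_induction with
  | mem x hx => obtain ⟨i, j, _, rfl⟩ := hx; exact perm_ell i j
  | one => exact perm_one
  | mul a b _ _ ha hb => rw [perm_mul, ha, hb, one_mul]
  | inv a _ ha => rw [perm_inv, ha, inv_one]

/-- pure elements that can be absorbed -/
def absorb (n : ℕ) : Subgroup (UVB n) where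
  carrier := {c | c ∈ Subgroup.closure (Lgen n) ∧
    ∀ α ∈ Subgroup.closure (Lgen n), Markov ⟨n, α * c⟩ ⟨n, α⟩}
  one_mem' := ⟨one_mem _, fun α _ => by rw [mul_one]; exact Markov.refl' _⟩
  mul_mem' := by
    rintro a b ⟨ha, ha'⟩ ⟨hb, hb'⟩
    refine ⟨mul_mem ha hb, fun α hα => ?_⟩
    rw [← mul_assoc]
    exact (hb' _ (mul_mem hα ha)).trans' (ha' _ hα)
  inv_mem' := by
    rintro a ⟨ha, ha'⟩
    refine ⟨inv_mem ha, fun α hα => ?_⟩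
    have := ha' _ (mul_mem hα (inv_mem ha))
    rw [inv_mul_cancel_right] at this
    exact this.symm'

lemma closure_conj {n : ℕ} {c : UVB n} (g : UVB n) (hc : c ∈ Subgroup.closure (Lgen n)) :
    g * c * g⁻¹ ∈ Subgroup.closure (Lgen n) := by
  apply pure_mem
  rw [perm_mul, perm_mul, perm_of_closure hc, perm_inv]; group

instance absorb_normal (n : ℕ) : (absorb n).Normal where
  conj_mem := by
    rintro c ⟨hc, hc'⟩ g
    refine ⟨closure_conj g hc, fun α hα => ?_⟩
    have h1 := hc' (g⁻¹ * α * g) (by simpa using closure_conj g⁻¹ hα)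
    have h2 := markov_conj (g⁻¹ * α * g * c) g
    have h3 := markov_conj (g⁻¹ * α * g) g
    rw [show g * (g⁻¹ * α * g * c) * g⁻¹ = α * (g * c * g⁻¹) by group] at h2
    rw [show g * (g⁻¹ * α * g) * g⁻¹ = α by group] at h3
    exact h2.symm'.trans' (h1.trans' h3)

lemma commutator_absorb (n : ℕ) :
    ⁅Subgroup.closure (Lgen n), Subgroup.closure (Lgen n)⁆ ≤ absorb n := by
  have gen : ∀ x ∈ Lgen n, ∀ y ∈ Lgen n,
      Commute (QuotientGroup.mk' (absorb n) x) (QuotientGroup.mk' (absorb n) y) := by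
    rintro _ ⟨i, j, hij, rfl⟩ _ ⟨k, l, hkl, rfl⟩
    by_cases h1 : i = k ∧ j = l
    · obtain ⟨rfl, rfl⟩ := h1; exact Commute.refl _
    by_cases h2 : i = l ∧ j = k
    · obtain ⟨rfl, rfl⟩ := h2
      have m1 : ell n i j ∈ Subgroup.closure (Lgen n) := Subgroup.subset_closure ⟨_, _, hij, rfl⟩
      have m2 : ell n j i ∈ Subgroup.closure (Lgen n) := Subgroup.subset_closure ⟨_, _, hkl, rfl⟩
      have : (ell n j i * ell n i j)⁻¹ * (ell n i j * ell n j i) ∈ absorb n := by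
        refine ⟨mul_mem (inv_mem (mul_mem m2 m1)) (mul_mem m1 m2), fun α hα => ?_⟩
        have := key_swap (mul_mem hα (inv_mem (mul_mem m2 m1))) hij
        rwa [inv_mul_cancel_right, mul_assoc] at this
      change _ * _ = _ * _
      rw [← map_mul, ← map_mul]
      exact (QuotientGroup.eq.mpr this).symm
    · exact (ell_comm hij hkl h1 h2).map _
  have step1 : ∀ x ∈ Subgroup.closure (Lgen n), ∀ y ∈ Lgen n,
      Commute (QuotientGroup.mk' (absorb n) x) (QuotientGroup.mk' (absorb n) y) := by
    intro x hx y hy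
    induction hx using Subgroup.closure_induction with
    | mem x hx => exact gen x hx y hy
    | one => rw [map_one]; exact Commute.one_left _
    | mul a b _ _ ha hb => rw [map_mul]; exact ha.mul_left hb
    | inv a _ ha => rw [map_inv]; exact ha.inv_left
  have step2 : ∀ x ∈ Subgroup.closure (Lgen n), ∀ y ∈ Subgroup.closure (Lgen n),
      Commute (QuotientGroup.mk' (absorb n) x) (QuotientGroup.mk' (absorb n) y) := by
    intro x hx y hy
    induction hy using Subgroup.closure_induction with
    | mem y hy => exact step1 x hx y hy
    | one => rw [map_one]; exact Commute.one_right _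
    | mul a b _ _ ha hb => rw [map_mul]; exact ha.mul_right hb
    | inv a _ ha => rw [map_inv]; exact ha.inv_right
  rw [Subgroup.commutator_le]
  intro x hx y hy
  rw [← QuotientGroup.eq_one_iff]
  refine (map_commutatorElement (QuotientGroup.mk' (absorb n)) x y).trans ?_
  rw [commutatorElement_eq_one_iff_commute]
  exact step2 x hx y hy

lemma backward {n : ℕ} {α β : UVB n} (hβ : perm β = 1) (π : Equiv.Perm (Fin n))
    (h : sec n π * α * (sec n π)⁻¹ * β⁻¹ ∈
      ⁅Subgroup.closure (Lgen n), Subgroup.closure (Lgen n)⁆) : Markov ⟨n, α⟩ ⟨n, β⟩ := by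
  have h1 := commutator_absorb n h
  have h2 := markov_conj α (sec n π)
  have h3 := markov_comm (sec n π * α * (sec n π)⁻¹ * β⁻¹) β
  rw [inv_mul_cancel_right] at h3
  exact h2.trans' (h3.trans' (h1.2 β (pure_mem hβ)))

end UVBProof

namespace UVBProof

open UVB

/-- extension of a matrix by zero -/
def zext {n : ℕ} (M : Fin n → Fin n → ℤ) : Fin (n + 1) → Fin (n + 1) → ℤ := fun i j =>
  if h : (i : ℕ) < n ∧ (j : ℕ) < n then M ⟨i, h.1⟩ ⟨j, h.2⟩ else 0

section
variable {n : ℕ} (M N : Fin n → Fin n → ℤ)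

@[simp] lemma zext_cc (i j : Fin n) : zext M i.castSucc j.castSucc = M i j := by simp [zext]
@[simp] lemma zext_l (j : Fin (n + 1)) : zext M (Fin.last n) j = 0 := by simp [zext]
@[simp] lemma zext_r (i : Fin (n + 1)) : zext M i (Fin.last n) = 0 := by simp [zext]

lemma zext_ext {K L : Fin (n + 1) → Fin (n + 1) → ℤ}
    (h1 : ∀ i j : Fin n, K i.castSucc j.castSucc = L i.castSucc j.castSucc)
    (h2 : ∀ j, K (Fin.last n) j = L (Fin.last n) j)
    (h3 : ∀ i, K i (Fin.last n) = L i (Fin.last n)) : K = L := by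
  funext i j
  induction i using Fin.lastCases with
  | last => exact h2 j
  | cast i =>
    induction j using Fin.lastCases with
    | last => exact h3 _
    | cast j => exact h1 i j

lemma zext_add : zext (M + N) = zext M + zext N := by
  apply zext_ext <;> intros <;> simp

lemma zext_neg : zext (-M) = -zext M := by
  apply zext_ext <;> intros <;> simp

lemma zext_zero : zext (0 : Fin n → Fin n → ℤ) = 0 := by
  apply zext_ext <;> intros <;> simp

lemma zext_act (π : Equiv.Perm (Fin n)) : zext (act π M) = act (ext1 n π) (zext M) := by
  apply zext_ext <;> intros <;> simp only [act, ← map_inv, ext1_castSucc, ext1_last, zext_cc,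
    zext_l, zext_r]

lemma zext_El (i j : Fin n) : zext (El i j) = El i.castSucc j.castSucc := by
  have hi := (Fin.castSucc_lt_last i).ne'
  have hj := (Fin.castSucc_lt_last j).ne'
  apply zext_ext
  · intro a b; simp [El]
  · intro b; simp [El, hi]
  · intro b; simp [El, hj]

end

/-- embedding of model groups -/
noncomputable def wemb (n : ℕ) : WM n →* WM (n + 1) :=
  MonoidHom.mk' (fun a => ⟨zext a.mat, ext1 n a.perm⟩) (by
    intro a b
    apply WM.ext
    · simp [zext_add, zext_act]
    · simp)

lemma model_incl {n : ℕ} (g : UVB n) : model (n + 1) (incl n g) = wemb n (model n g) := by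
  have : (model (n + 1)).comp (incl n) = (wemb n).comp (model n) := by
    apply uvb_hom_ext
    · intro k h1 h2
      obtain ⟨k, rfl⟩ : ∃ k', k = k' + 1 := ⟨k - 1, by omega⟩
      simp only [MonoidHom.comp_apply]
      rw [incl_sigma _ _ h1 h2, model_sigma _ _ (by omega), model_sigma _ _ (by omega)]
      apply WM.ext
      · change _ = zext _
        rw [zext_neg, zext_El]; rfl
      · change _ = ext1 n _
        rw [ext1_swap]; rfl
    · intro k h1 h2
      obtain ⟨k, rfl⟩ : ∃ k', k = k' + 1 := ⟨k - 1, by omega⟩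
      simp only [MonoidHom.comp_apply]
      rw [incl_rho _ _ h1 h2, model_rho _ _ (by omega), model_rho _ _ (by omega)]
      apply WM.ext
      · change _ = zext _
        rw [zext_zero]
      · change _ = ext1 n _
        rw [ext1_swap]; rfl
  exact congrArg (fun f => f g) this

lemma perm_incl {n : ℕ} (g : UVB n) : perm (incl n g) = ext1 n (perm g) := by
  rw [perm, model_incl]; rfl
lemma mat_incl {n : ℕ} (g : UVB n) : mat (incl n g) = zext (mat g) := by
  rw [mat, model_incl]; rfl

/-- total linking between colours -/
def tot {m n : ℕ} (c : Fin m → Fin n) (M : Fin m → Fin m → ℤ) (x y : Fin n) : ℤ :=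
  ∑ i, ∑ j, if c i = x ∧ c j = y then M i j else 0

section
variable {m n : ℕ} (c : Fin m → Fin n) (M N : Fin m → Fin m → ℤ) (x y : Fin n)

lemma tot_add : tot c (M + N) x y = tot c M x y + tot c N x y := by
  simp only [tot, ← Finset.sum_add_distrib]
  refine Finset.sum_congr rfl fun i _ => Finset.sum_congr rfl fun j _ => ?_
  split_ifs <;> simp

lemma tot_neg : tot c (-M) x y = - tot c M x y := by
  simp only [tot, ← Finset.sum_neg_distrib]
  refine Finset.sum_congr rfl fun i _ => Finset.sum_congr rfl fun j _ => ?_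
  split_ifs <;> simp

lemma tot_zero : tot c 0 x y = 0 := by simp [tot]

lemma tot_act (π : Equiv.Perm (Fin m)) : tot c (act π M) x y = tot (c ∘ π) M x y := by
  simp only [tot]
  rw [← Equiv.sum_comp π]
  refine Finset.sum_congr rfl fun i _ => ?_
  rw [← Equiv.sum_comp π]
  refine Finset.sum_congr rfl fun j _ => ?_
  simp [act]

lemma tot_El {i j : Fin m} (h : c i = c j) (hxy : x ≠ y) : tot c (El i j) x y = 0 := by
  simp only [tot]
  refine Finset.sum_eq_zero fun a _ => Finset.sum_eq_zero fun b _ => ?_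
  split_ifs with h1
  · simp only [El]
    rw [if_neg]
    rintro ⟨rfl, rfl⟩
    exact hxy (h1.1.symm.trans (h.trans h1.2))
  · rfl

lemma tot_zext (c : Fin (m + 1) → Fin n) : tot c (zext M) x y = tot (c ∘ Fin.castSucc) M x y := by
  simp [tot, Fin.sum_univ_castSucc]
end

/-- the colouring invariant -/
def Has (n : ℕ) (A : Fin n → Fin n → ℤ) (p : Σ m, UVB m) : Prop :=
  ∃ c : Fin p.1 → Fin n, Function.Surjective c ∧ c ∘ perm p.2 = c ∧
    ∀ x y, x ≠ y → tot c (mat p.2) x y = A x y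

lemma has_conj {n : ℕ} {A : Fin n → Fin n → ℤ} {m : ℕ} {g : UVB m} (γ : UVB m)
    (h : Has n A ⟨m, g⟩) : Has n A ⟨m, γ * g * γ⁻¹⟩ := by
  obtain ⟨c, hc, hp, hA⟩ := h
  simp only at hp hA
  have hp' : ∀ i, c (perm g i) = c i := fun i => congrFun hp i
  refine ⟨c ∘ ⇑(perm γ)⁻¹, hc.comp (Equiv.surjective _), ?_, ?_⟩
  · funext i
    simp [perm_mul, perm_inv, hp']
  · intro x y hxy
    change tot _ (mat (γ * g * γ⁻¹)) x y = _
    rw [mat_mul, mat_mul, mat_inv, tot_add, tot_add, perm_mul, act_neg, tot_neg, ← act_mul,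
      tot_act, tot_act]
    have e1 : (c ∘ ⇑(perm γ)⁻¹) ∘ ⇑(perm γ) = c := by funext i; simp
    have e2 : (c ∘ ⇑(perm γ)⁻¹) ∘ ⇑(perm γ * perm g * (perm γ)⁻¹) = c ∘ ⇑(perm γ)⁻¹ := by
      funext i; simp [hp']
    rw [e1, e2, hA x y hxy]
    ring

lemma has_stab {n : ℕ} {A : Fin n → Fin n → ℤ} {m : ℕ} (g : UVB (m + 1)) (t : UVB (m + 2))
    (ht : perm t = Equiv.swap (Fin.last m).castSucc (Fin.last (m + 1)))
    (hm : ∀ c : Fin (m + 2) → Fin n, c (Fin.last m).castSucc = c (Fin.last (m + 1)) →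
      ∀ x y, x ≠ y → tot c (mat t) x y = 0) :
    Has n A ⟨m + 1, g⟩ ↔ Has n A ⟨m + 2, incl (m + 1) g * t⟩ := by
  constructor
  · rintro ⟨c, hc, hp, hA⟩
    simp only at hp hA c
    have hp' : ∀ i, c (perm g i) = c i := fun i => congrFun hp i
    let c' : Fin (m + 2) → Fin n := Fin.snoc (α := fun _ => Fin n) c (c (Fin.last m))
    have c1 : ∀ i : Fin (m + 1), c' i.castSucc = c i := fun i => by simp [c']
    have c2 : c' (Fin.last (m + 1)) = c (Fin.last m) := by simp [c']
    have c3 : c' ∘ Fin.castSucc = c := funext c1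
    have hE : c' ∘ (ext1 (m + 1) (perm g)) = c' := by
      funext i
      induction i using Fin.lastCases with
      | last => simp [ext1_last]
      | cast i => simp [ext1_castSucc, c1, hp']
    refine ⟨c', ?_, ?_, ?_⟩
    · intro x
      obtain ⟨i, rfl⟩ := hc x
      exact ⟨i.castSucc, c1 i⟩
    · change c' ∘ perm (incl (m + 1) g * t) = c'
      rw [perm_mul, ht, perm_incl, Equiv.Perm.coe_mul, ← Function.comp_assoc, hE]
      funext i
      simp only [Function.comp_apply, Equiv.swap_apply_def]
      split_ifs with h1 h2
      · rw [h1, c1, c2]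
      · rw [h2, c1, c2]
      · rfl
    · intro x y hxy
      change tot c' (mat (incl (m + 1) g * t)) x y = _
      rw [mat_mul, tot_add, mat_incl, tot_zext, c3, hA x y hxy, perm_incl, tot_act, hE,
        hm c' (by rw [c1, c2]) x y hxy, add_zero]
  · rintro ⟨c', hc, hp, hA⟩
    simp only at hp hA c'
    rw [perm_mul, ht, perm_incl] at hp
    have hp' : ∀ i, c' (ext1 (m + 1) (perm g) (Equiv.swap (Fin.last m).castSucc
      (Fin.last (m + 1)) i)) = c' i := fun i => congrFun hp i
    have hPQ : c' (Fin.last m).castSucc = c' (Fin.last (m + 1)) := by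
      have := hp' (Fin.last m).castSucc
      rw [Equiv.swap_apply_left, ext1_last] at this
      exact this.symm
    have hE : c' ∘ (ext1 (m + 1) (perm g)) = c' := by
      funext i
      have := hp' (Equiv.swap (Fin.last m).castSucc (Fin.last (m + 1)) i)
      rw [Equiv.swap_apply_self] at this
      simp only [Function.comp_apply]
      rw [this, Equiv.swap_apply_def]
      split_ifs with h1 h2
      · rw [h1, hPQ]
      · rw [h2, hPQ]
      · rfl
    refine ⟨c' ∘ Fin.castSucc, ?_, ?_, ?_⟩
    · intro x
      obtain ⟨i, rfl⟩ := hc x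
      induction i using Fin.lastCases with
      | last => exact ⟨Fin.last m, hPQ⟩
      | cast i => exact ⟨i, rfl⟩
    · funext i
      have := congrFun hE i.castSucc
      simp only [Function.comp_apply, ext1_castSucc] at this
      exact this
    · intro x y hxy
      have := hA x y hxy
      rw [mat_mul, tot_add, mat_incl, tot_zext, perm_incl, tot_act, hE, hm c' hPQ x y hxy,
        add_zero] at this
      exact this

lemma has_small {n : ℕ} (hn : 2 ≤ n) {A : Fin n → Fin n → ℤ} {m : ℕ} (hm : m < 2) (g : UVB m) :
    ¬ Has n A ⟨m, g⟩ := by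
  rintro ⟨c, hc, _⟩
  have := Fintype.card_le_of_surjective c hc
  simp at this
  omega

lemma has_base {n : ℕ} (hn : 2 ≤ n) {A : Fin n → Fin n → ℤ} {p q : Σ m, UVB m}
    (h : MarkovBase p q) : Has n A p ↔ Has n A q := by
  have stab : ∀ (m : ℕ) (g : UVB m) (t : UVB (m + 1)),
      (∀ (k : ℕ) (e : m = k + 1), model (m + 1) t = model (m + 1) (sigma (m + 1) m) ∨
        model (m + 1) t = model (m + 1) (sigma (m + 1) m)⁻¹ ∨
        model (m + 1) t = model (m + 1) (rho (m + 1) m)) →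
      (Has n A ⟨m, g⟩ ↔ Has n A ⟨m + 1, incl m g * t⟩) := by
    intro m g t ht
    rcases m with _ | m
    · exact iff_of_false (has_small hn (by omega) _) (has_small hn (by omega) _)
    have e1 := model_sigma (m + 2) m (by omega)
    have e2 := model_rho (m + 2) m (by omega)
    apply has_stab
    · rcases ht m rfl with h | h | h
      · rw [perm, h, e1]; rfl
      · rw [perm, h, map_inv, e1, WM.inv_perm, Equiv.swap_inv]; rfl
      · rw [perm, h, e2]; rfl
    · intro c hc x y hxy
      have hc' : c ⟨m, by omega⟩ = c ⟨m + 1, by omega⟩ := hc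
      rcases ht m rfl with h | h | h
      · rw [mat, h, e1]
        change tot c (-El _ _) x y = 0
        rw [tot_neg, tot_El c x y hc' hxy, neg_zero]
      · rw [mat, h, map_inv, e1, WM.inv_mat]
        change tot c (-act _ (-El _ _)) x y = 0
        rw [act_neg, neg_neg, act_El]
        apply tot_El c x y _ hxy
        simp [hc']
      · rw [mat, h, e2]
        exact tot_zero c x y
  cases h with
  | conj m α γ =>
    refine ⟨has_conj γ, fun h => ?_⟩
    have := has_conj γ⁻¹ h
    rwa [show γ⁻¹ * (γ * α * γ⁻¹) * γ⁻¹⁻¹ = α by group] at this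
  | stabPos m α => exact stab m α _ fun _ _ => Or.inl rfl
  | stabNeg m α => exact stab m α _ fun _ _ => Or.inr (Or.inl rfl)
  | stabVirt m α => exact stab m α _ fun _ _ => Or.inr (Or.inr rfl)

lemma has_markov {n : ℕ} (hn : 2 ≤ n) {A : Fin n → Fin n → ℤ} {p q : Σ m, UVB m}
    (h : Markov p q) : Has n A p ↔ Has n A q := by
  induction h with
  | rel _ _ h => exact has_base hn h
  | refl _ => exact Iff.rfl
  | symm _ _ _ h => exact h.symm
  | trans _ _ _ _ _ h1 h2 => exact h1.trans h2

lemma tot_id {n : ℕ} (M : Fin n → Fin n → ℤ) (x y : Fin n) : tot id M x y = M x y := by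
  simp [tot, ite_and, Finset.sum_ite_eq']

lemma mat_zero_mem {n : ℕ} {p : UVB n} (hp : perm p = 1)
    (hm : ∀ i j, i ≠ j → mat p i j = 0) :
    p ∈ ⁅Subgroup.closure (Lgen n), Subgroup.closure (Lgen n)⁆ := by
  have mem : ∀ i j, ell n i j ∈ Subgroup.closure (Lgen n) := fun i j => pure_mem (perm_ell i j)
  have key : ∀ (g : UVB n) (hg : g ∈ Subgroup.closure (Lgen n)),
      (Abelianization.of (⟨g, hg⟩ : Subgroup.closure (Lgen n))) =
      ∏ i, ∏ j, Abelianization.of (⟨ell n i j, mem i j⟩ : Subgroup.closure (Lgen n)) ^ mat g i j := by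
    intro g hg
    induction hg using Subgroup.closure_induction with
    | mem x hx =>
      obtain ⟨a, b, hab, rfl⟩ := hx
      rw [mat_ell hab]
      simp only [El]
      rw [Finset.prod_eq_single a, Finset.prod_eq_single b]
      · simp
      · intro j _ hj; simp [hj]
      · simp
      · intro i _ hi; simp [hi]
      · simp
    | one =>
      rw [mat_one]
      simp only [Pi.zero_apply, zpow_zero, Finset.prod_const_one]
      exact map_one _
    | mul a b ha hb iha ihb =>
      rw [mat_mul, perm_of_closure ha, act_one]
      simp only [Pi.add_apply, zpow_add, Finset.prod_mul_distrib]
      rw [← iha, ← ihb, ← map_mul]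
      rfl
    | inv a ha iha =>
      rw [mat_inv, perm_of_closure ha, inv_one, act_one]
      simp only [Pi.neg_apply, zpow_neg, Finset.prod_inv_distrib]
      rw [← iha, ← map_inv]
      rfl
  have h1 := key p (pure_mem hp)
  have h2 : ∏ i, ∏ j, Abelianization.of (⟨ell n i j, mem i j⟩ : Subgroup.closure (Lgen n)) ^
      mat p i j = 1 := by
    refine Finset.prod_eq_one fun i _ => Finset.prod_eq_one fun j _ => ?_
    by_cases hij : i = j
    · subst hij
      have : (⟨ell n i i, mem i i⟩ : Subgroup.closure (Lgen n)) = 1 :=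
        Subtype.ext (ell_self n i)
      rw [this, map_one, one_zpow]
    · rw [hm i j hij, zpow_zero]
  rw [h2] at h1
  have h3 : (⟨p, pure_mem hp⟩ : Subgroup.closure (Lgen n)) ∈
      commutator (Subgroup.closure (Lgen n)) := by
    rw [← Abelianization.ker_of]; exact h1
  rw [← Subgroup.map_subtype_commutator]
  exact ⟨_, h3, rfl⟩

lemma forward {n : ℕ} (hn : 2 ≤ n) {α β : UVB n} (hα : perm α = 1) (hβ : perm β = 1)
    (h : Markov ⟨n, α⟩ ⟨n, β⟩) : ∃ π : Equiv.Perm (Fin n),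
    sec n π * α * (sec n π)⁻¹ * β⁻¹ ∈
      ⁅Subgroup.closure (Lgen n), Subgroup.closure (Lgen n)⁆ := by
  have h0 : Has n (mat α) ⟨n, α⟩ := by
    refine ⟨id, Function.surjective_id, ?_, fun x y _ => tot_id _ x y⟩
    simp [hα]
  obtain ⟨c, hc, -, hA⟩ := (has_markov hn h).mp h0
  simp only at hA c
  have hb : Function.Bijective c := Finite.surjective_iff_bijective.mp hc
  let τ : Equiv.Perm (Fin n) := Equiv.ofBijective c hb
  have hτ : ∀ x y, x ≠ y → mat β (τ⁻¹ x) (τ⁻¹ y) = mat α x y := by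
    intro x y hxy
    rw [← hA x y hxy]
    have := tot_id (act τ (mat β)) x y
    rw [tot_act] at this
    exact this.symm
  refine ⟨τ⁻¹, mat_zero_mem ?_ ?_⟩
  · rw [perm_mul, perm_mul, perm_mul, perm_inv, perm_inv, hα, hβ, perm_sec]; simp
  · intro i j hij
    have e := hτ (τ i) (τ j) (fun h => hij (τ.injective h))
    have z : ∀ a, τ⁻¹ (τ a) = a := fun a => τ.symm_apply_apply a
    rw [z, z] at e
    simp only [perm_mul, mat_mul, mat_inv, perm_inv, perm_sec, mat_sec, hα, hβ]
    simp [act, e]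

/-- The final assembly. -/
lemma main_thm (n : ℕ) (hn : 2 ≤ n)
    (ι : UVB n →* Equiv.Perm (Fin n)) (hι : IsIota n ι)
    (s : Equiv.Perm (Fin n) →* UVB n) (hs : IsPermSection n s)
    (α β : UVB n) (hα : α ∈ ι.ker) (hβ : β ∈ ι.ker) :
    Markov ⟨n, α⟩ ⟨n, β⟩ ↔
      ∃ π : Equiv.Perm (Fin n), s π * α * (s π)⁻¹ * β⁻¹ ∈ ⁅ι.ker, ι.ker⁆ := by
  have hsec : s = sec n := by
    apply perm_hom_ext
    intro k hk
    rw [sec_adj]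
    exact hs (k + 1) (by omega) (by omega)
  let P : UVB n →* Equiv.Perm (Fin n) := MonoidHom.mk' perm perm_mul
  have hP : ι = P := by
    apply uvb_hom_ext
    · intro k h1 h2
      obtain ⟨k, rfl⟩ : ∃ k', k = k' + 1 := ⟨k - 1, by omega⟩
      rw [(hι (k + 1) h1 h2).1]
      change _ = (model n _).perm
      rw [model_sigma n k (by omega)]
      rfl
    · intro k h1 h2
      obtain ⟨k, rfl⟩ : ∃ k', k = k' + 1 := ⟨k - 1, by omega⟩
      rw [(hι (k + 1) h1 h2).2]
      change _ = (model n _).perm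
      rw [model_rho n k (by omega)]
      rfl
  have hker : ι.ker = Subgroup.closure (Lgen n) := by
    ext g
    rw [MonoidHom.mem_ker, hP]
    exact ⟨fun h => pure_mem h, fun h => perm_of_closure h⟩
  rw [hker] at hα hβ
  have hα' := perm_of_closure hα
  have hβ' := perm_of_closure hβ
  rw [hker, hsec]
  exact ⟨forward hn hα' hβ', fun ⟨π, h⟩ => backward hβ' π h⟩

end UVBProof
/-! ## Statement 10 -/

/-- main theorem of the paper for pure braids.  For `n ≥ 2` and
α, β ∈ UVP n: α and β are fused Markov equivalent (i.e. their closures are equivalent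
fused links) iff there is a permutation π ∈ S_n with
`s(π) α s(π)⁻¹ β⁻¹ ∈ [UVP n, UVP n]` (i.e. their images in the abelianization of
UVP n are conjugate by an element of S_n ≤ UVB n). -/
theorem statement10 (n : ℕ) (hn : 2 ≤ n)
    (ι : UVB n →* Equiv.Perm (Fin n)) (hι : IsIota n ι)
    (s : Equiv.Perm (Fin n) →* UVB n) (hs : IsPermSection n s)
    (α β : UVB n) (hα : α ∈ ι.ker) (hβ : β ∈ ι.ker) :
    Markov ⟨n, α⟩ ⟨n, β⟩ ↔
      ∃ π : Equiv.Perm (Fin n), s π * α * (s π)⁻¹ * β⁻¹ ∈ ⁅ι.ker, ι.ker⁆ := by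
  exact UVBProof.main_thm n hn ι hι s hs α β hα hβ
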